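/- Let n ≥ 4 be an even integer and let V̂(x,t) = 2n (2 ū(x,t) φ(x,t) + φ(x,t)²)^{n−1} (ū(x,t) + φ(x,t)). Then there exist τ₁ ≥ 1 and a constant c > 0 such that for all t ≥ τ₁, the negative part of V̂ satisfies sup_{x∈ℝ} max(−V̂(x,t), 0) ≤ c t^{−γ(n−1)(δ'+1)}, where δ' = (√(4nδ(δ+1)+1) − 1)/2 if n ≤ 5 and δ' = 2δ + 1 if n ≥ 6. -/

import Mathlib

noncomputable def kap : ℝ := 1 / Real.sqrt Real.pi

noncomputable def kap3 : ℝ := -kap / 12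

noncomputable def gam (n : ℕ) : ℝ := 1 / (2 * (n : ℝ) + 1)

noncomputable def eps (n : ℕ) : ℝ := 1 / ((n : ℝ) - 1)

noncomputable def alph (n : ℕ) : ℝ := 1 / 2 - gam n

noncomputable def del (n : ℕ) : ℝ := ((n : ℝ) + 2) / ((n : ℝ) - 1)

noncomputable def lam (n : ℕ) : ℝ :=
  (del n * (del n + 1) / (2 * kap) ^ n) ^ (1 / ((n : ℝ) - 1))

noncomputable def lam0 (n : ℕ) : ℝ :=
  (lam n / (2 * kap)) *
    (-2 * (n : ℝ) * kap3 * del n * (del n + 1) - kap * (del n - 2 * eps n)) /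
    (((n : ℝ) - 1) * del n * (del n + 1) + 2 * (2 * del n - 1))

def IsReactiveProfile (n : ℕ) (η : ℝ → ℝ) : Prop :=
  ContDiffOn ℝ 2 η (Set.Ici 0) ∧
  (∀ z ∈ Set.Ici (0:ℝ), 0 < η z) ∧
  (∀ z ∈ Set.Ici (0:ℝ),
    derivWithin (derivWithin η (Set.Ici 0)) (Set.Ici 0) z
      = (2 * kap * z * η z + (η z) ^ 2) ^ n) ∧
  derivWithin η (Set.Ici 0) 0 = -kap ∧
  Filter.Tendsto η Filter.atTop (nhds 0)

/-- The corrector h: C² on [0,∞), satisfies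
h'' + γη + αzη' = n(2κzη+η²)^{n−1}((2κz+2η)h + 2κ₃z³η), h'(0) = 0,
h(z) − λ₀ z^{2−δ} → 0 as z → ∞. -/
def IsCorrector (n : ℕ) (η h : ℝ → ℝ) : Prop :=
  ContDiffOn ℝ 2 h (Set.Ici 0) ∧
  (∀ z ∈ Set.Ici (0:ℝ),
    derivWithin (derivWithin h (Set.Ici 0)) (Set.Ici 0) z + gam n * η z
        + alph n * z * derivWithin η (Set.Ici 0) z
      = (n : ℝ) * (2 * kap * z * η z + (η z) ^ 2) ^ (n - 1)
          * ((2 * kap * z + 2 * η z) * h z + 2 * kap3 * z ^ 3 * η z)) ∧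
  derivWithin h (Set.Ici 0) 0 = 0 ∧
  Filter.Tendsto (fun z : ℝ => h z - lam0 n * z ^ (2 - del n)) Filter.atTop (nhds 0)

noncomputable def mu1 (y : ℝ) : ℝ :=
  (2 / Real.sqrt Real.pi) * ∫ σ in (0:ℝ)..(y / 2), Real.exp (-σ ^ 2)

def IsDiffusiveProfile (n : ℕ) (μ : ℝ → ℝ) : Prop :=
  ContDiffOn ℝ 2 μ (Set.Ioi 0) ∧
  (∀ y ∈ Set.Ioi (0:ℝ), 0 < μ y) ∧
  (∀ y ∈ Set.Ioi (0:ℝ),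
    deriv (deriv μ) y + y / 2 * deriv μ y + eps n * μ y = (2 * mu1 y * μ y) ^ n) ∧
  Filter.Tendsto (fun y : ℝ => y ^ del n * μ y) (nhdsWithin 0 (Set.Ioi 0)) (nhds (lam n)) ∧
  Filter.Tendsto (fun y : ℝ => y ^ (2 * eps n) * μ y) Filter.atTop (nhds 0)

/-- u(x,t) = −erf(x/(2√t)). -/
noncomputable def uu (x t : ℝ) : ℝ := -mu1 (x / Real.sqrt t)

/-- ū(x,t) = μ₁(|x|/√t). -/
noncomputable def ubar (x t : ℝ) : ℝ := mu1 (|x| / Real.sqrt t)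

/-- φ₁(z) = η(z) − λ z^{−δ}. -/
noncomputable def phi1 (n : ℕ) (η : ℝ → ℝ) (z : ℝ) : ℝ := η z - lam n * z ^ (-(del n))

/-- φ₂(z) = −λ₀ z^{2−δ} + h(z). -/
noncomputable def phi2 (n : ℕ) (h : ℝ → ℝ) (z : ℝ) : ℝ := -lam0 n * z ^ (2 - del n) + h z

/-- μ₃(y) = μ₂(y) − λ y^{−δ}. -/
noncomputable def mu3 (n : ℕ) (μ : ℝ → ℝ) (y : ℝ) : ℝ := μ y - lam n * y ^ (-(del n))

/-- The asymptotic profile v_∞. -/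
noncomputable def vInf (n : ℕ) (η μ h : ℝ → ℝ) (x t : ℝ) : ℝ :=
  mu1 (|x| / Real.sqrt t) + t ^ (-(eps n)) * μ (|x| / Real.sqrt t)
    + t ^ (-(gam n)) * phi1 n η (|x| / t ^ alph n)
    + t ^ (-(3 * gam n)) * phi2 n h (|x| / t ^ alph n)

/-- φ(x,t) = t^{−γ} η(|z|) + t^{−ε} μ₃(|y|) + t^{−3γ} φ₂(|z|). -/
noncomputable def phiFun (n : ℕ) (η μ h : ℝ → ℝ) (x t : ℝ) : ℝ :=
  t ^ (-(gam n)) * η (|x| / t ^ alph n) + t ^ (-(eps n)) * mu3 n μ (|x| / Real.sqrt t)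
    + t ^ (-(3 * gam n)) * phi2 n h (|x| / t ^ alph n)

noncomputable def delp (n : ℕ) : ℝ :=
  if n ≤ 5 then (Real.sqrt (4 * (n : ℝ) * del n * (del n + 1) + 1) - 1) / 2
  else 2 * del n + 1

/-- The potential V̂(x,t) = 2n (2ūφ + φ²)^{n−1} (ū + φ). -/
noncomputable def Vhat (n : ℕ) (η μ h : ℝ → ℝ) (x t : ℝ) : ℝ :=
  2 * (n : ℝ) * (2 * ubar x t * phiFun n η μ h x t + phiFun n η μ h x t ^ 2) ^ (n - 1)
    * (ubar x t + phiFun n η μ h x t)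


open Set Filter Topology

lemma second_deriv_nonpos (f f1 : ℝ → ℝ) (f2 z : ℝ)
    (h1 : ∀ᶠ y in 𝓝 z, HasDerivAt f (f1 y) y) (h2 : HasDerivAt f1 f2 z)
    (hm : IsLocalMax f z) : f1 z = 0 ∧ f2 ≤ 0 := by
  have hz : f1 z = 0 := hm.hasDerivAt_eq_zero h1.self_of_nhds
  refine ⟨hz, ?_⟩
  by_contra hcon
  push Not at hcon
  have hd : deriv f =ᶠ[𝓝 z] f1 := h1.mono fun y hy => hy.deriv
  have hdd : deriv (deriv f) z = f2 := by
    rw [hd.deriv_eq]; exact h2.deriv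
  have hslope : ∀ᶠ y in 𝓝[>] z, 0 < f1 y := by
    have := (hasDerivAt_iff_tendsto_slope.1 h2).eventually (lt_mem_nhds hcon)
    have h3 : ∀ᶠ y in 𝓝[>] z, 0 < slope f1 z y :=
      this.filter_mono (nhdsWithin_mono _ (fun y hy => ne_of_gt hy))
    filter_upwards [h3, self_mem_nhdsWithin] with y hy hy2
    rw [slope_def_field, hz, sub_zero] at hy
    have : 0 < y - z := sub_pos.2 hy2
    exact (div_pos_iff_of_pos_right this).1 hy
  obtain ⟨e, he, hball⟩ := Metric.eventually_nhds_iff.1 (h1.and hm)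
  obtain ⟨c, hc, hcI⟩ := (mem_nhdsGT_iff_exists_Ioo_subset).1 hslope
  set b := min (z + e / 2) ((z + c) / 2) with hb
  have hc' : z < c := hc
  have hzb : z < b := lt_min (by linarith) (by linarith)
  have hbe : b ≤ z + e / 2 := min_le_left _ _
  have hbc : b < c := lt_of_le_of_lt (min_le_right _ _) (by linarith)
  have hder : ∀ y ∈ Icc z b, HasDerivAt f (f1 y) y := by
    intro y hy
    refine (hball ?_).1
    rw [Real.dist_eq, abs_lt]; constructor <;> linarith [hy.1, hy.2]
  have hmono : StrictMonoOn f (Icc z b) := by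
    apply strictMonoOn_of_deriv_pos (convex_Icc z b)
    · exact fun y hy => (hder y hy).continuousAt.continuousWithinAt
    · intro y hy
      rw [interior_Icc] at hy
      rw [(hder y ⟨hy.1.le, hy.2.le⟩).deriv]
      exact hcI ⟨hy.1, hy.2.trans hbc⟩
  have h5 := hmono (left_mem_Icc.2 hzb.le) (right_mem_Icc.2 hzb.le) hzb
  have h6 : f b ≤ f z := by
    refine (hball ?_).2
    rw [Real.dist_eq, abs_lt]; constructor <;> linarith
  linarith

lemma max_prin (f f1 f2 : ℝ → ℝ) (a : ℝ) (hc : ContinuousOn f (Ici a))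
    (h1 : ∀ z > a, HasDerivAt f (f1 z) z) (h2 : ∀ z > a, HasDerivAt f1 (f2 z) z)
    (ha : f a ≤ 0) (hlim : Tendsto f atTop (𝓝 0))
    (hpos : ∀ z > a, 0 < f z → 0 < f2 z) : ∀ z ≥ a, f z ≤ 0 := by
  intro z hz
  by_contra hcon
  push Not at hcon
  obtain ⟨Z, hZ⟩ := eventually_atTop.1 (hlim.eventually (gt_mem_nhds hcon))
  set B := max Z (z + 1)
  have hBz : z + 1 ≤ B := le_max_right _ _
  obtain ⟨m, hm, hmax⟩ := isCompact_Icc.exists_isMaxOn (s := Icc a B) (f := f)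
    ⟨z, hz, by linarith⟩ (hc.mono Icc_subset_Ici_self)
  have hmz : f z ≤ f m := hmax ⟨hz, by linarith⟩
  have hma : a < m := lt_of_le_of_ne hm.1 (by rintro rfl; linarith)
  have hmB : m < B := lt_of_le_of_ne hm.2 (by
    rintro h; have := hZ m (h ▸ le_max_left _ _); linarith)
  have hloc : IsLocalMax f m := hmax.isLocalMax (Icc_mem_nhds hma hmB)
  have := (second_deriv_nonpos f f1 (f2 m) m
    ((lt_mem_nhds hma).mono fun y hy => h1 y hy) (h2 m hma) hloc).2
  have := hpos m hma (by linarith)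
  linarith

/-- a concave function with finite limit at infinity is nondecreasing -/
lemma concave_lim (f f1 f2 : ℝ → ℝ) (a : ℝ)
    (h1 : ∀ z ≥ a, HasDerivAt f (f1 z) z) (h2 : ∀ z ≥ a, HasDerivAt f1 (f2 z) z)
    (hlim : Tendsto f atTop (𝓝 0)) (hneg : ∀ z ≥ a, f2 z ≤ 0) : ∀ z ≥ a, 0 ≤ f1 z := by
  intro z hz
  by_contra hcon
  push Not at hcon
  have hanti : AntitoneOn f1 (Ici a) := by
    apply antitoneOn_of_deriv_nonpos (convex_Ici a)
    · exact fun y hy => (h2 y hy).continuousAt.continuousWithinAt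
    · intro y hy
      rw [interior_Ici] at hy
      exact (h2 y (le_of_lt hy)).differentiableAt.differentiableWithinAt
    · intro y hy
      rw [interior_Ici] at hy
      rw [(h2 y (le_of_lt hy)).deriv]; exact hneg y (le_of_lt hy)
  have hanti2 : AntitoneOn (fun y => f y - f1 z * y) (Ici z) := by
    have hd : ∀ y ≥ z, HasDerivAt (fun y => f y - f1 z * y) (f1 y - f1 z) y := by
      intro y hy
      have := (h1 y (le_trans hz hy)).fun_sub ((hasDerivAt_id y).const_mul (f1 z))
      simpa using this
    apply antitoneOn_of_deriv_nonpos (convex_Ici z)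
    · exact fun y hy => (hd y hy).continuousAt.continuousWithinAt
    · intro y hy
      rw [interior_Ici] at hy
      exact (hd y (le_of_lt hy)).differentiableAt.differentiableWithinAt
    · intro y hy
      rw [interior_Ici] at hy
      rw [(hd y (le_of_lt hy)).deriv]
      have := hanti (show z ∈ Ici a from hz) (show y ∈ Ici a from le_trans hz (le_of_lt hy)) (le_of_lt hy)
      linarith
  obtain ⟨Z, hZ⟩ := eventually_atTop.1 (hlim.eventually (lt_mem_nhds (show (-1:ℝ) < 0 by norm_num)))
  set y := max (max Z z) (z + (|f z| + 1) / (- f1 z)) with hy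
  have hyZ : Z ≤ y := le_trans (le_max_left _ _) (le_max_left _ _)
  have hyz : z ≤ y := le_trans (le_max_right _ _) (le_max_left _ _)
  have hy3 : z + (|f z| + 1) / (- f1 z) ≤ y := le_max_right _ _
  have h5 := hanti2 (self_mem_Ici) hyz hyz
  simp only at h5
  have h6 := hZ y hyZ
  have h7 : (|f z| + 1) / (- f1 z) ≤ y - z := by linarith
  rw [div_le_iff₀ (by linarith)] at h7
  have h8 := le_abs_self (f z)
  nlinarith

lemma one_add_pow_le (n : ℕ) (X : ℝ) (hX : 0 ≤ X) :
    ∃ C : ℝ, 0 < C ∧ ∀ x, 0 ≤ x → x ≤ X → (1 + x) ^ n ≤ 1 + C * x := by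
  induction n with
  | zero => exact ⟨1, one_pos, fun x hx _ => by simpa using hx⟩
  | succ k ih =>
    obtain ⟨C, hC, h⟩ := ih
    refine ⟨C + 1 + C * X, by positivity, fun x hx hx2 => ?_⟩
    rw [pow_succ]
    have h1 := h x hx hx2
    calc (1 + x) ^ k * (1 + x) ≤ (1 + C * x) * (1 + x) := by gcongr
      _ = 1 + (C + 1) * x + C * x * x := by ring
      _ ≤ 1 + (C + 1) * x + C * x * X := by gcongr
      _ = _ := by ring

lemma pow_sub_pow_ge (n : ℕ) (a b : ℝ) (hb : 0 ≤ b) (hab : b ≤ a) :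
    (n : ℝ) * b ^ (n - 1) * (a - b) ≤ a ^ n - b ^ n := by
  induction n with
  | zero => simp
  | succ k ih =>
    rcases Nat.eq_zero_or_pos k with rfl | hk
    · simp
    obtain ⟨j, rfl⟩ := Nat.exists_eq_succ_of_ne_zero hk.ne'
    simp only [Nat.succ_eq_add_one, Nat.add_sub_cancel] at *
    have h1 : b ^ (j+1) ≤ a ^ (j+1) := pow_le_pow_left₀ hb hab _
    push_cast at *
    have h2 : a ^ (j+1+1) - b ^ (j+1+1) = a ^ (j+1) * (a - b) + b * (a ^ (j+1) - b ^ (j+1)) := by ring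
    rw [h2]
    have h3 : b ^ (j+1) * (a - b) ≤ a ^ (j+1) * (a - b) :=
      mul_le_mul_of_nonneg_right h1 (by linarith)
    have h4 := mul_le_mul_of_nonneg_left ih hb
    have h5 : ((j:ℝ) + 1 + 1) * b ^ (j+1) * (a - b) = b ^ (j+1) * (a - b) + b * (((j:ℝ) + 1) * b ^ j * (a - b)) := by ring
    linarith

lemma pow_sub_pow_le' (n : ℕ) (a b : ℝ) (hb : 0 ≤ b) (hab : b ≤ a) :
    a ^ n - b ^ n ≤ (n : ℝ) * a ^ (n - 1) * (a - b) := by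
  induction n with
  | zero => simp
  | succ k ih =>
    rcases Nat.eq_zero_or_pos k with rfl | hk
    · simp
    obtain ⟨j, rfl⟩ := Nat.exists_eq_succ_of_ne_zero hk.ne'
    simp only [Nat.succ_eq_add_one, Nat.add_sub_cancel] at *
    have h1 : b ^ (j+1) ≤ a ^ (j+1) := pow_le_pow_left₀ hb hab _
    push_cast at *
    have h2 : a ^ (j+1+1) - b ^ (j+1+1) = b ^ (j+1) * (a - b) + a * (a ^ (j+1) - b ^ (j+1)) := by ring
    rw [h2]
    have h3 : b ^ (j+1) * (a - b) ≤ a ^ (j+1) * (a - b) :=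
      mul_le_mul_of_nonneg_right h1 (by linarith)
    have h4 := mul_le_mul_of_nonneg_left ih (hb.trans hab)
    have h5 : ((j:ℝ) + 1 + 1) * a ^ (j+1) * (a - b) = a ^ (j+1) * (a - b) + a * (((j:ℝ) + 1) * a ^ j * (a - b)) := by ring
    linarith

lemma kap_pos : 0 < kap := by unfold kap; positivity

lemma nsub_pos {n : ℕ} (hn : 4 ≤ n) : (3:ℝ) ≤ (n:ℝ) - 1 := by
  have : (4:ℝ) ≤ n := by exact_mod_cast hn
  linarith

lemma del_mul {n : ℕ} (hn : 4 ≤ n) : del n * ((n:ℝ) - 1) = n + 2 := by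
  have := nsub_pos hn
  unfold del; field_simp

lemma del_gt {n : ℕ} (hn : 4 ≤ n) : 1 < del n := by
  have := nsub_pos hn
  unfold del; rw [lt_div_iff₀ (by linarith)]; linarith

lemma del_le {n : ℕ} (hn : 4 ≤ n) : del n ≤ 2 := by
  have := nsub_pos hn
  unfold del; rw [div_le_iff₀ (by linarith)]; linarith

lemma gam_pos (n : ℕ) : 0 < gam n := by unfold gam; positivity

lemma eps_eq {n : ℕ} (hn : 4 ≤ n) : eps n = gam n * (1 + del n) := by
  have := nsub_pos hn
  unfold eps gam del; field_simp; ring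

lemma alph_add (n : ℕ) : alph n + gam n = 1 / 2 := by unfold alph; ring

lemma alph_pos {n : ℕ} (hn : 4 ≤ n) : 0 < alph n := by
  have := nsub_pos hn
  have : gam n < 1 / 2 := by
    unfold gam; rw [div_lt_div_iff₀ (by linarith) (by norm_num)]; linarith
  unfold alph; linarith

lemma lam_pos {n : ℕ} (hn : 4 ≤ n) : 0 < lam n := by
  have := del_gt hn
  have := kap_pos
  unfold lam; positivity

lemma lam_pow {n : ℕ} (hn : 4 ≤ n) : (2 * kap) ^ n * lam n ^ (n - 1) = del n * (del n + 1) := by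
  have h1 := del_gt hn
  have h2 := kap_pos
  have h3 := nsub_pos hn
  have h4 : 0 < del n * (del n + 1) / (2 * kap) ^ n := by positivity
  unfold lam
  rw [← Real.rpow_natCast _ (n-1), ← Real.rpow_mul h4.le]
  have : (1 / ((n:ℝ) - 1)) * ((n - 1 : ℕ) : ℝ) = 1 := by
    rw [Nat.cast_sub (by omega)]; push_cast; field_simp
  rw [this, Real.rpow_one]
  field_simp

/-- the exact power solution of the reduced equation -/
lemma KI {n : ℕ} (hn : 4 ≤ n) {z : ℝ} (hz : 0 < z) :
    (2 * kap * z) ^ n * (lam n * z ^ (-del n)) ^ (n - 1) = del n * (del n + 1) / z ^ 2 := by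
  have h := lam_pow hn
  have h3 := nsub_pos hn
  have h5 : (z ^ (-del n)) ^ (n - 1) = (z ^ (n + 2))⁻¹ := by
    rw [← Real.rpow_natCast _ (n-1), ← Real.rpow_mul hz.le, ← Real.rpow_natCast z (n+2),
      ← Real.rpow_neg hz.le]
    congr 1
    rw [Nat.cast_sub (by omega)]; push_cast
    have := del_mul hn
    linarith
  rw [mul_pow (2 * kap) z, mul_pow (lam n), h5, ← h, pow_add]
  have : z ^ n ≠ 0 := by positivity
  field_simp

lemma KI1 {n : ℕ} (hn : 4 ≤ n) {z : ℝ} (hz : 0 < z) :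
    (2 * kap * z) ^ (n - 1) * (lam n * z ^ (-del n)) ^ (n - 1) * (2 * kap * z)
      = del n * (del n + 1) / z ^ 2 := by
  rw [← KI hn hz]
  obtain ⟨m, rfl⟩ : ∃ m, n = m + 1 := ⟨n - 1, by omega⟩
  simp only [Nat.add_sub_cancel]
  ring

lemma KI2 {n : ℕ} (hn : 4 ≤ n) {z : ℝ} (hz : 0 < z) :
    (2 * kap * z * (lam n * z ^ (-del n))) ^ n
      = del n * (del n + 1) * lam n * z ^ (-del n) / z ^ 2 := by
  have := KI hn hz
  rw [mul_pow]
  have h2 : (lam n * z ^ (-del n)) ^ n = (lam n * z ^ (-del n)) ^ (n-1) * (lam n * z ^ (-del n)) := by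
    rw [← pow_succ]; congr 1; omega
  rw [h2, ← mul_assoc, this]; ring

lemma lam0_nonneg {n : ℕ} (hn : 4 ≤ n) : 0 ≤ lam0 n := by
  have h1 := del_gt hn
  have h2 := kap_pos
  have h3 := nsub_pos hn
  have h4 := lam_pos hn
  have h5 := del_mul hn
  have h6 : 0 ≤ -2 * (n : ℝ) * kap3 * del n * (del n + 1) - kap * (del n - 2 * eps n) := by
    have h7 : del n - 2 * eps n ≤ 2 := by
      have : 0 ≤ eps n := by unfold eps; positivity
      have := del_le hn
      linarith
    have h8 : (12:ℝ) ≤ n * del n * (del n + 1) := by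
      have hh : (n:ℝ) * del n = n + 2 + del n := by linarith
      rw [hh]
      have h4n : (4:ℝ) ≤ n := by exact_mod_cast hn
      nlinarith
    unfold kap3
    nlinarith
  unfold lam0
  apply div_nonneg
  · apply mul_nonneg (by positivity) h6
  · have : 0 < 2 * del n - 1 := by linarith
    positivity

lemma lam0_eq {n : ℕ} (hn : 4 ≤ n) :
    lam0 n * (n * (del n * (del n + 1)) - (2 - del n) * (1 - del n))
      = -2 * n * kap3 * (del n * (del n + 1)) * (lam n / (2 * kap))
        + lam n * (gam n - alph n * del n) := by
  have h1 := del_gt hn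
  have h2 := kap_pos
  have h3 := nsub_pos hn
  have h5 : 0 < (((n : ℝ) - 1) * del n * (del n + 1) + 2 * (2 * del n - 1)) := by
    have : 0 < 2 * del n - 1 := by linarith
    positivity
  have h6 : (n * (del n * (del n + 1)) - (2 - del n) * (1 - del n)) =
    (((n : ℝ) - 1) * del n * (del n + 1) + 2 * (2 * del n - 1)) := by ring
  rw [h6]
  unfold lam0
  rw [div_mul_cancel₀ _ h5.ne', eps_eq hn]
  unfold alph
  field_simp
  ring

lemma delp_facts {n : ℕ} (hn : 4 ≤ n) (he : Even n) :
    2 * del n < delp n ∧ delp n ≤ 2 * del n + 1 ∧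
    delp n * (delp n + 1) ≤ n * (del n * (del n + 1)) ∧
    ∃ m0 > 0, ∀ z : ℝ, 1 ≤ z →
      m0 * z ^ (-(2 * del n + 1)) ≤ (n * (del n * (del n + 1)) - delp n * (delp n + 1)) * z ^ (-delp n)
        + 1 / 2 * ((2 * del n + 1) * (2 * del n + 1 + 1) - n * (del n * (del n + 1))) * z ^ (-(2 * del n + 1)) := by
  by_cases h4 : n = 4
  · subst h4
    have hd : del 4 = 2 := by unfold del; norm_num
    have hp : delp 4 = (Real.sqrt 97 - 1) / 2 := by
      unfold delp; rw [if_pos (by norm_num), hd]; norm_num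
    have hs : Real.sqrt 97 ^ 2 = 97 := Real.sq_sqrt (by norm_num)
    have h1 : Real.sqrt 97 < 10 := by rw [Real.sqrt_lt' (by norm_num)]; norm_num
    have h2 : 9 < Real.sqrt 97 := by rw [Real.lt_sqrt (by norm_num)]; norm_num
    have h3 : delp 4 * (delp 4 + 1) = 24 := by rw [hp]; nlinarith
    refine ⟨by rw [hd, hp]; linarith, by rw [hd, hp]; linarith, by rw [hd, h3]; norm_num, 3,
      by norm_num, fun z hz => ?_⟩
    rw [h3, hd]; norm_num
  · have h6 : 6 ≤ n := by
      obtain ⟨k, hk⟩ := he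
      omega
    have hp : delp n = 2 * del n + 1 := by unfold delp; rw [if_neg (by omega)]
    have h1 := del_gt hn
    have h2 := del_mul hn
    have h6' : (6:ℝ) ≤ n := by exact_mod_cast h6
    have h7 : 0 < n * (del n * (del n + 1)) - (2 * del n + 1) * (2 * del n + 1 + 1) := by
      have : n * (del n * (del n + 1)) - (2 * del n + 1) * (2 * del n + 1 + 1)
        = (del n + 1) * (n * del n - 4 * del n - 2) := by ring
      rw [this]
      apply mul_pos (by linarith)
      have hh : (n:ℝ) * del n = n + 2 + del n := by linarith
      have : del n ≤ 8/5 := by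
        unfold del; rw [div_le_iff₀ (by linarith)]; linarith
      linarith
    rw [hp]
    refine ⟨by linarith, le_refl _, by linarith, _, half_pos h7, fun z hz => ?_⟩
    apply le_of_eq; ring

lemma hd_rp (c : ℝ) {z : ℝ} (hz : 0 < z) :
    HasDerivAt (fun z : ℝ => z ^ (-c)) (-c * z ^ (-c) / z) z := by
  have := Real.hasDerivAt_rpow_const (x := z) (p := -c) (Or.inl hz.ne')
  rw [Real.rpow_sub_one hz.ne'] at this
  convert this using 1; ring

lemma hd_rp2 (c : ℝ) {z : ℝ} (hz : 0 < z) :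
    HasDerivAt (fun z : ℝ => -c * z ^ (-c) / z) (c * (c + 1) * z ^ (-c) / z ^ 2) z := by
  have := ((hd_rp c hz).const_mul (-c)).fun_div (hasDerivAt_id' z) hz.ne'
  refine this.congr_deriv ?_
  field_simp; ring

lemma tend_rp {c : ℝ} (hc : 0 < c) : Tendsto (fun z : ℝ => z ^ (-c)) atTop (𝓝 0) :=
  tendsto_rpow_neg_atTop hc

structure EtaHyp (n : ℕ) (η η1 : ℝ → ℝ) : Prop where
  hn : 4 ≤ n
  hc : ContinuousOn η (Ici 0)
  h1 : ∀ z > 0, HasDerivAt η (η1 z) z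
  h2 : ∀ z > 0, HasDerivAt η1 ((2 * kap * z * η z + η z ^ 2) ^ n) z
  pos : ∀ z ≥ 0, 0 < η z
  lim : Tendsto η atTop (𝓝 0)

lemma EtaHyp.upper {n : ℕ} {η η1 : ℝ → ℝ} (H : EtaHyp n η η1) :
    ∀ z > 0, η z ≤ lam n * z ^ (-del n) := by
  intro z hz
  have hk := kap_pos
  have hl := lam_pos H.hn
  have hD := del_gt H.hn
  have hev : ∀ᶠ y in 𝓝[>] (0:ℝ), η y ≤ lam n * y ^ (-del n) := by
    have e1 : ∀ᶠ y in 𝓝[>] (0:ℝ), η y < η 0 + 1 := by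
      have := (H.hc 0 self_mem_Ici).mono (Ioi_subset_Ici_self)
      exact this.tendsto.eventually (gt_mem_nhds (by linarith))
    have e2 : ∀ᶠ y in 𝓝[>] (0:ℝ), (η 0 + 1) / lam n ≤ y ^ (-del n) :=
      (tendsto_rpow_neg_nhdsGT_zero (by linarith : -del n < 0)).eventually_ge_atTop _
    filter_upwards [e1, e2] with y h1 h2
    rw [div_le_iff₀ hl] at h2
    linarith
  obtain ⟨z0, hz0, hz0'⟩ := (hev.and (Ioo_mem_nhdsGT hz)).exists
  have := max_prin (fun y => η y - lam n * y ^ (-del n))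
    (fun y => η1 y - lam n * (-del n * y ^ (-del n) / y))
    (fun y => (2 * kap * y * η y + η y ^ 2) ^ n - lam n * (del n * (del n + 1) * y ^ (-del n) / y ^ 2))
    z0 ?_ ?_ ?_ ?_ ?_ ?_ z hz0'.2.le
  · linarith
  · intro y hy
    have hy0 : 0 < y := lt_of_lt_of_le hz0'.1 hy
    exact ((H.h1 y hy0).fun_sub ((hd_rp _ hy0).const_mul _)).continuousAt.continuousWithinAt
  · intro y hy
    have hy0 : 0 < y := lt_trans hz0'.1 hy
    exact ((H.h1 y hy0).fun_sub ((hd_rp _ hy0).const_mul _))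
  · intro y hy
    have hy0 : 0 < y := lt_trans hz0'.1 hy
    exact ((H.h2 y hy0).fun_sub ((hd_rp2 _ hy0).const_mul _))
  · simpa using hz0
  · simpa using H.lim.sub ((tend_rp (by linarith : 0 < del n)).const_mul (lam n))
  · intro y hy hpos
    have hy0 : 0 < y := lt_trans hz0'.1 hy
    have hE := H.pos y hy0.le
    have := KI2 H.hn hy0
    have h5 : (2 * kap * y * (lam n * y ^ (-del n))) ^ n < (2 * kap * y * η y + η y ^ 2) ^ n := by
      apply pow_lt_pow_left₀ _ (by positivity) (by have := H.hn; omega)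
      have : 2 * kap * y * (lam n * y ^ (-del n)) < 2 * kap * y * η y := by
        apply mul_lt_mul_of_pos_left _ (by positivity)
        simpa using hpos
      nlinarith
    rw [this] at h5
    have : lam n * (del n * (del n + 1) * y ^ (-del n) / y ^ 2) = del n * (del n + 1) * lam n * y ^ (-del n) / y ^ 2 := by ring
    linarith

lemma EtaHyp.lower {n : ℕ} {η η1 : ℝ → ℝ} (H : EtaHyp n η η1) :
    ∃ a > 0, ∀ z ≥ 0, lam n * (z + a) ^ (-del n) ≤ η z := by
  have hk := kap_pos
  have hl := lam_pos H.hn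
  have hD := del_gt H.hn
  have hE0 := H.pos 0 le_rfl
  have hlim : Tendsto (fun z : ℝ => lam n * z ^ (-del n)) atTop (𝓝 0) := by
    simpa using (tend_rp (by linarith : 0 < del n)).const_mul (lam n)
  obtain ⟨a, ⟨ha1, ha2⟩, ha3⟩ := ((hlim.eventually (gt_mem_nhds (by positivity : 0 < 2 * kap))).and
    (hlim.eventually (gt_mem_nhds hE0)) |>.and (eventually_ge_atTop (1:ℝ))).exists
  refine ⟨a, by linarith, fun z hz => ?_⟩
  have hd1 : ∀ y ≥ 0, HasDerivAt (fun y : ℝ => (y + a) ^ (-del n)) (-del n * (y + a) ^ (-del n) / (y + a)) y := by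
    intro y hy
    have := (hd_rp (del n) (by linarith : 0 < y + a)).comp_add_const y a
    simpa using this
  have hd2 : ∀ y ≥ 0, HasDerivAt (fun y : ℝ => -del n * (y + a) ^ (-del n) / (y + a))
      (del n * (del n + 1) * (y + a) ^ (-del n) / (y + a) ^ 2) y := by
    intro y hy
    have := (hd_rp2 (del n) (by linarith : 0 < y + a)).comp_add_const y a
    simpa using this
  have := max_prin (fun y => lam n * (y + a) ^ (-del n) - η y)
    (fun y => lam n * (-del n * (y + a) ^ (-del n) / (y + a)) - η1 y)
    (fun y => lam n * (del n * (del n + 1) * (y + a) ^ (-del n) / (y + a) ^ 2) - (2 * kap * y * η y + η y ^ 2) ^ n)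
    0 ?_ ?_ ?_ ?_ ?_ ?_ z hz
  · linarith
  · apply ContinuousOn.sub _ H.hc
    intro y hy
    exact ((hd1 y hy).const_mul _).continuousAt.continuousWithinAt
  · intro y hy
    exact ((hd1 y (le_of_lt hy)).const_mul _).fun_sub (H.h1 y hy)
  · intro y hy
    exact ((hd2 y (le_of_lt hy)).const_mul _).fun_sub (H.h2 y hy)
  · simp only [zero_add]; linarith
  · have := (hlim.comp (tendsto_atTop_add_const_right atTop a tendsto_id)).sub H.lim
    simpa using this
  · intro y hy hpos
    have hy0 : 0 < y := hy
    have hE := H.pos y hy0.le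
    have hya : 0 < y + a := by linarith
    have := KI2 H.hn hya
    set v := lam n * (y + a) ^ (-del n) with hv
    have hvpos : 0 < v := by positivity
    have hva : v ≤ 2 * kap := by
      have : (y + a) ^ (-del n) ≤ a ^ (-del n) :=
        Real.rpow_le_rpow_of_nonpos (by linarith) (by linarith) (by linarith)
      nlinarith
    have hvE : η y < v := by simpa using hpos
    have h5 : (2 * kap * y * η y + η y ^ 2) ^ n < (2 * kap * (y + a) * v) ^ n := by
      apply pow_lt_pow_left₀ _ (by positivity) (by have := H.hn; omega)
      have h6 : 2 * kap * y * η y < 2 * kap * y * v := by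
        apply mul_lt_mul_of_pos_left hvE (by positivity)
      have h7 : η y ^ 2 ≤ v ^ 2 := pow_le_pow_left₀ hE.le hvE.le 2
      have h8 : v ^ 2 ≤ 2 * kap * v := by nlinarith
      have h9 : 2 * kap * v * 1 ≤ 2 * kap * v * a := by gcongr
      nlinarith
    rw [this] at h5
    have : lam n * (del n * (del n + 1) * (y + a) ^ (-del n) / (y + a) ^ 2) = del n * (del n + 1) * lam n * (y + a) ^ (-del n) / (y + a) ^ 2 := by ring
    linarith

/-- lower bound for the linearized coefficient -/
lemma EtaHyp.coef {n : ℕ} {η η1 : ℝ → ℝ} (H : EtaHyp n η η1) :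
    ∃ b > 0, ∀ z > 0, n * (del n * (del n + 1)) / z ^ 2 * (1 - b / z) ≤
      n * ((2 * kap * z) ^ n * η z ^ (n - 1)) := by
  obtain ⟨a, ha, hlow⟩ := H.lower
  have hk := kap_pos
  have hl := lam_pos H.hn
  have hD := del_gt H.hn
  have hn := H.hn
  refine ⟨(n + 2) * a, by positivity, fun z hz => ?_⟩
  have h1 := hlow z hz.le
  have hza : 0 < z + a := by linarith
  have h2 : (lam n * (z + a) ^ (-del n)) ^ (n - 1) ≤ η z ^ (n - 1) := by
    apply pow_le_pow_left₀ (by positivity) h1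
  have h5 : ∀ x : ℝ, 0 < x → (x ^ (-del n)) ^ (n - 1) = (x ^ (n + 2))⁻¹ := by
    intro z hz
    rw [← Real.rpow_natCast _ (n-1), ← Real.rpow_mul hz.le, ← Real.rpow_natCast z (n+2),
      ← Real.rpow_neg hz.le]
    congr 1
    rw [Nat.cast_sub (by omega)]; push_cast
    have := del_mul hn
    linarith
  have h6 := KI hn hz
  rw [mul_pow (lam n), h5 _ hz] at h6
  rw [mul_pow (lam n), h5 _ hza] at h2
  have h7 : 1 - (n + 2) * a / z ≤ (z / (z + a)) ^ (n + 2) := by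
    have hb := one_add_mul_le_pow (a := -(a / (z + a))) (by
      have : a / (z + a) ≤ 1 := by rw [div_le_one hza]; linarith
      linarith) (n + 2)
    have e1 : 1 + -(a / (z + a)) = z / (z + a) := by field_simp; ring
    rw [e1] at hb
    refine le_trans ?_ hb
    have e2 : a / (z + a) ≤ a / z := by gcongr; linarith
    have e3 : ((n:ℝ) + 2) * (a / (z + a)) ≤ (n + 2) * (a / z) := by gcongr
    push_cast
    have e4 : ((n:ℝ) + 2) * a / z = (n + 2) * (a / z) := by ring
    linarith
  rw [mul_div_assoc, mul_assoc]
  apply mul_le_mul_of_nonneg_left _ (by positivity)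
  calc del n * (del n + 1) / z ^ 2 * (1 - (n + 2) * a / z)
      ≤ del n * (del n + 1) / z ^ 2 * (z / (z + a)) ^ (n + 2) := by gcongr
    _ = (2 * kap * z) ^ n * (lam n ^ (n - 1) * ((z + a) ^ (n + 2))⁻¹) := by
        rw [← h6, div_pow]; field_simp
    _ ≤ _ := by gcongr

lemma rp_s {n : ℕ} {z : ℝ} (hz : 0 < z) :
    z ^ (-(2 * del n + 1)) = z ^ (-del n) * z ^ (-del n) / z := by
  rw [← Real.rpow_add hz, ← Real.rpow_sub_one hz.ne']; congr 1; ring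

lemma EtaHyp.err {n : ℕ} {η η1 : ℝ → ℝ} (H : EtaHyp n η η1) :
    ∃ C > 0, ∀ z ≥ 1, (2 * kap * z * η z + η z ^ 2) ^ n - (2 * kap * z * η z) ^ n
      ≤ C * z ^ (-(2 * del n + 1)) / z ^ 2 := by
  have hk := kap_pos
  have hl := lam_pos H.hn
  have hD := del_gt H.hn
  obtain ⟨C, hC, hpow⟩ := one_add_pow_le n (lam n / (2 * kap)) (by positivity)
  refine ⟨del n * (del n + 1) * lam n * C * (lam n / (2 * kap)), by positivity, fun z hz => ?_⟩
  have hz0 : 0 < z := by linarith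
  have hE := H.pos z hz0.le
  have hup := H.upper z hz0
  have hu : z ^ (-del n) ≤ 1 := Real.rpow_le_one_of_one_le_of_nonpos hz (by linarith)
  have hu0 : 0 < z ^ (-del n) := by positivity
  have hx : η z / (2 * kap * z) ≤ lam n / (2 * kap) := by
    apply div_le_div₀ hl.le (by nlinarith) (by positivity) (by nlinarith)
  have h1 := hpow (η z / (2 * kap * z)) (by positivity) hx
  have h2 : (2 * kap * z * η z + η z ^ 2) ^ n = (2 * kap * z * η z) ^ n * (1 + η z / (2 * kap * z)) ^ n := by
    rw [← mul_pow]; congr 1; field_simp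
  have h3 : (2 * kap * z * η z) ^ n ≤ del n * (del n + 1) * lam n * z ^ (-del n) / z ^ 2 := by
    rw [← KI2 H.hn hz0]; gcongr
  calc (2 * kap * z * η z + η z ^ 2) ^ n - (2 * kap * z * η z) ^ n
      ≤ (2 * kap * z * η z) ^ n * (1 + C * (η z / (2 * kap * z))) - (2 * kap * z * η z) ^ n := by
        rw [h2]; gcongr
    _ = (2 * kap * z * η z) ^ n * (C * (η z / (2 * kap * z))) := by ring
    _ ≤ (del n * (del n + 1) * lam n * z ^ (-del n) / z ^ 2) * (C * ((lam n * z ^ (-del n)) / (2 * kap * z))) := by gcongr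
    _ = _ := by rw [rp_s hz0]; field_simp

set_option maxHeartbeats 1000000 in
lemma EtaHyp.w_bound {n : ℕ} {η η1 : ℝ → ℝ} (H : EtaHyp n η η1) (he : Even n) :
    ∃ C > 0, ∃ z1 ≥ 1, ∀ z ≥ z1, lam n * z ^ (-del n) - η z ≤ C * z ^ (-delp n) := by
  have hk := kap_pos
  have hl := lam_pos H.hn
  have hD := del_gt H.hn
  have hn := H.hn
  obtain ⟨b, hb, hcoef⟩ := H.coef
  obtain ⟨C1, hC1, herr⟩ := H.err
  obtain ⟨hp1, hp2, hp3, m0, hm0, hm⟩ := delp_facts H.hn he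
  set p := delp n with hp
  set s := 2 * del n + 1 with hs
  set M := n * (del n * (del n + 1)) with hM
  have hMpos : 0 < M := by positivity
  have hlim : Tendsto (fun z : ℝ => z ^ (-(p + 1 - s))) atTop (𝓝 0) := tend_rp (by linarith)
  obtain ⟨z1, hz1⟩ := eventually_atTop.1 ((hlim.eventually
    (gt_mem_nhds (by positivity : 0 < m0 / (2 * (M * b))))).and (eventually_ge_atTop (max 1 (b + 1))))
  have hz1a := (hz1 z1 le_rfl).2
  have hz11 : 1 ≤ z1 := le_trans (le_max_left _ _) hz1a
  have hz1b : b + 1 ≤ z1 := le_trans (le_max_right _ _) hz1a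
  have hgt : ∀ z ≥ z1, 1 / 2 * z ^ (-p) ≤ z ^ (-p) - 1 / 2 * z ^ (-s) := by
    intro z hz
    have : z ^ (-s) ≤ z ^ (-p) := Real.rpow_le_rpow_of_exponent_le (by linarith) (by linarith)
    linarith
  set G : ℝ := z1 ^ (-p) - 1 / 2 * z1 ^ (-s) with hG
  have hGpos : 0 < G := lt_of_lt_of_le (by positivity) (hgt z1 le_rfl)
  set C := max (2 * C1 / m0 + 1) ((lam n * z1 ^ (-del n) - η z1) / G) with hC
  have hCa : 2 * C1 / m0 + 1 ≤ C := le_max_left _ _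
  have hCb : (lam n * z1 ^ (-del n) - η z1) / G ≤ C := le_max_right _ _
  have hCpos : 0 < C := lt_of_lt_of_le (by positivity) hCa
  refine ⟨C, hCpos, z1, hz11, fun z hz => ?_⟩
  have := max_prin (fun y => lam n * y ^ (-del n) - η y - C * (y ^ (-p) - 1 / 2 * y ^ (-s)))
    (fun y => lam n * (-del n * y ^ (-del n) / y) - η1 y
      - C * (-p * y ^ (-p) / y - 1 / 2 * (-s * y ^ (-s) / y)))
    (fun y => lam n * (del n * (del n + 1) * y ^ (-del n) / y ^ 2) - (2 * kap * y * η y + η y ^ 2) ^ n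
      - C * (p * (p + 1) * y ^ (-p) / y ^ 2 - 1 / 2 * (s * (s + 1) * y ^ (-s) / y ^ 2)))
    z1 ?_ ?_ ?_ ?_ ?_ ?_ z hz
  · have h3 : 0 ≤ z ^ (-s) := by have : 0 < z := by linarith
                                 positivity
    nlinarith
  · intro y hy
    have hy0 : 0 < y := by have : z1 ≤ y := hy
                           linarith
    exact ((((hd_rp _ hy0).const_mul _).fun_sub (H.h1 y hy0)).fun_sub
      (((hd_rp _ hy0).fun_sub ((hd_rp _ hy0).const_mul _)).const_mul _)).continuousAt.continuousWithinAt
  · intro y hy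
    have hy0 : 0 < y := by linarith
    exact ((((hd_rp _ hy0).const_mul _).fun_sub (H.h1 y hy0)).fun_sub
      (((hd_rp _ hy0).fun_sub ((hd_rp _ hy0).const_mul _)).const_mul _))
  · intro y hy
    have hy0 : 0 < y := by linarith
    exact ((((hd_rp2 _ hy0).const_mul _).fun_sub (H.h2 y hy0)).fun_sub
      (((hd_rp2 _ hy0).fun_sub ((hd_rp2 _ hy0).const_mul _)).const_mul _))
  · rw [div_le_iff₀ hGpos, hG] at hCb
    linarith
  · have e1 := (tend_rp (by linarith : 0 < del n)).const_mul (lam n)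
    have e2 := (tend_rp (by linarith : 0 < p)).sub ((tend_rp (by linarith : 0 < s)).const_mul (1/2))
    simpa using (e1.sub H.lim).sub (e2.const_mul C)
  · intro y hy hpos
    have hy0 : 0 < y := by linarith
    have hE := H.pos y hy0.le
    have hup := H.upper y hy0
    have k1 := hcoef y hy0
    have k2 := herr y (by linarith)
    have k3 := pow_sub_pow_ge n (2 * kap * y * (lam n * y ^ (-del n))) (2 * kap * y * η y)
      (by positivity) (by gcongr)
    have k4 : (n:ℝ) * (2 * kap * y * η y) ^ (n - 1) * (2 * kap * y * (lam n * y ^ (-del n)) - 2 * kap * y * η y)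
        = n * ((2 * kap * y) ^ n * η y ^ (n - 1)) * (lam n * y ^ (-del n) - η y) := by
      obtain ⟨m, rfl⟩ : ∃ m, n = m + 1 := ⟨n - 1, by omega⟩
      simp only [Nat.add_sub_cancel]
      ring
    rw [k4, KI2 hn hy0] at k3
    set w := lam n * y ^ (-del n) - η y with hw
    have k5 : 0 ≤ 1 - b / y := by
      rw [sub_nonneg, div_le_one hy0]; linarith
    have k6 := hgt y hy.le
    have kp : 0 < y ^ (-p) := by positivity
    have ks : 0 < y ^ (-s) := by positivity
    set g := y ^ (-p) - 1 / 2 * y ^ (-s) with hg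
    have k7 : M / y ^ 2 * (1 - b / y) * (C * g) ≤ n * ((2 * kap * y) ^ n * η y ^ (n - 1)) * w := by
      apply mul_le_mul k1 (by linarith) (mul_nonneg hCpos.le (by linarith)) (by positivity)
    have k8 : y ^ (-p) / y ≤ m0 / (2 * (M * b)) * y ^ (-s) := by
      have : y ^ (-p) / y = y ^ (-(p + 1 - s)) * y ^ (-s) := by
        rw [← Real.rpow_add hy0, ← Real.rpow_sub_one hy0.ne']; congr 1; ring
      rw [this]
      exact mul_le_mul_of_nonneg_right (hz1 y hy.le).1.le ks.le
    have k9 : M * b * (y ^ (-p) / y) ≤ m0 / 2 * y ^ (-s) := by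
      calc M * b * (y ^ (-p) / y) ≤ M * b * (m0 / (2 * (M * b)) * y ^ (-s)) := by gcongr
        _ = _ := by field_simp
    have k10 : g / y ≤ y ^ (-p) / y := by gcongr; linarith
    have k11 : M * b * (g / y) ≤ m0 / 2 * y ^ (-s) := le_trans (by gcongr) k9
    have k12 := hm y (by linarith)
    have k13 : C1 < C * (m0 / 2) := by
      have : 2 * C1 / m0 < C := by linarith
      rw [div_lt_iff₀ hm0] at this; linarith
    have key : 0 < C * (M * g - M * b * (g / y) - p * (p + 1) * y ^ (-p) + 1 / 2 * (s * (s + 1) * y ^ (-s))) - C1 * y ^ (-s) := by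
      have : m0 / 2 * y ^ (-s) ≤ (M * g - M * b * (g / y) - p * (p + 1) * y ^ (-p) + 1 / 2 * (s * (s + 1) * y ^ (-s))) := by
        have : M * g = M * y ^ (-p) - 1 / 2 * M * y ^ (-s) := by rw [hg]; ring
        rw [this]
        linarith
      have h1 := mul_le_mul_of_nonneg_left this hCpos.le
      have h2 := mul_pos (sub_pos.2 k13) ks
      have h3 : (C * (m0 / 2) - C1) * y ^ (-s) = C * (m0 / 2 * y ^ (-s)) - C1 * y ^ (-s) := by ring
      linarith
    have key2 := div_pos key (by positivity : 0 < y ^ 2)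
    refine lt_of_lt_of_le key2 ?_
    have e1 : (C * (M * g - M * b * (g / y) - p * (p + 1) * y ^ (-p) + 1 / 2 * (s * (s + 1) * y ^ (-s))) - C1 * y ^ (-s)) / y ^ 2
      = M / y ^ 2 * (1 - b / y) * (C * g) - C1 * y ^ (-s) / y ^ 2
        - C * (p * (p + 1) * y ^ (-p) / y ^ 2 - 1 / 2 * (s * (s + 1) * y ^ (-s) / y ^ 2)) := by
      field_simp; ring
    rw [e1]
    have e2 : lam n * (del n * (del n + 1) * y ^ (-del n) / y ^ 2) = del n * (del n + 1) * lam n * y ^ (-del n) / y ^ 2 := by ring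
    rw [e2]
    linarith

lemma EtaHyp.deriv_bound {n : ℕ} {η η1 : ℝ → ℝ} (H : EtaHyp n η η1) :
    ∃ C > 0, ∀ z ≥ 1, -(z * η1 z) ≤ del n * lam n * z ^ (-del n) + C * z ^ (-(2 * del n + 1)) := by
  have hk := kap_pos
  have hl := lam_pos H.hn
  have hD := del_gt H.hn
  obtain ⟨C1, hC1, herr⟩ := H.err
  set s := 2 * del n + 1 with hs
  refine ⟨C1 * s, by positivity, fun z hz => ?_⟩
  have := concave_lim (fun y => η y - lam n * y ^ (-del n) - C1 * y ^ (-s))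
    (fun y => η1 y - lam n * (-del n * y ^ (-del n) / y) - C1 * (-s * y ^ (-s) / y))
    (fun y => (2 * kap * y * η y + η y ^ 2) ^ n - lam n * (del n * (del n + 1) * y ^ (-del n) / y ^ 2)
      - C1 * (s * (s + 1) * y ^ (-s) / y ^ 2)) 1 ?_ ?_ ?_ ?_ z hz
  · have hz0 : 0 < z := by linarith
    have := mul_nonneg hz0.le this
    have e : z * (η1 z - lam n * (-del n * z ^ (-del n) / z) - C1 * (-s * z ^ (-s) / z))
      = z * η1 z + del n * lam n * z ^ (-del n) + C1 * s * z ^ (-s) := by field_simp; ring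
    linarith
  · intro y hy
    have hy0 : 0 < y := by linarith
    exact (((H.h1 y hy0).fun_sub ((hd_rp _ hy0).const_mul _)).fun_sub ((hd_rp _ hy0).const_mul _))
  · intro y hy
    have hy0 : 0 < y := by linarith
    exact (((H.h2 y hy0).fun_sub ((hd_rp2 _ hy0).const_mul _)).fun_sub ((hd_rp2 _ hy0).const_mul _))
  · have e1 := (tend_rp (by linarith : 0 < del n)).const_mul (lam n)
    have e2 := ((tend_rp (by linarith : 0 < s)).const_mul C1)
    simpa using (H.lim.sub e1).sub e2
  · intro y hy
    have hy0 : 0 < y := by linarith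
    have hE := H.pos y hy0.le
    have h1 := herr y hy
    have h3 : (2 * kap * y * η y) ^ n ≤ del n * (del n + 1) * lam n * y ^ (-del n) / y ^ 2 := by
      rw [← KI2 H.hn hy0]; have := H.upper y hy0; gcongr
    have h4 : C1 * y ^ (-s) / y ^ 2 ≤ C1 * (s * (s + 1) * y ^ (-s) / y ^ 2) := by
      have hs1 : 1 ≤ s * (s + 1) := by nlinarith
      have : 0 ≤ C1 * y ^ (-s) / y ^ 2 := by positivity
      have e : C1 * (s * (s + 1) * y ^ (-s) / y ^ 2) = (s * (s + 1)) * (C1 * y ^ (-s) / y ^ 2) := by ring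
      rw [e]; nlinarith
    have e2 : lam n * (del n * (del n + 1) * y ^ (-del n) / y ^ 2) = del n * (del n + 1) * lam n * y ^ (-del n) / y ^ 2 := by ring
    linarith

set_option maxHeartbeats 1000000 in
lemma EtaHyp.resid {n : ℕ} {η η1 : ℝ → ℝ} (H : EtaHyp n η η1) (he : Even n) :
    ∃ C > 0, ∃ z1 ≥ 1, ∀ z ≥ z1,
      (n * (2 * kap * z * η z + η z ^ 2) ^ (n - 1) * (2 * kap * z + 2 * η z)) * lam0 n * z ^ 2 * z ^ (-del n)
       + 2 * n * kap3 * (2 * kap * z * η z + η z ^ 2) ^ (n - 1) * z ^ 3 * η z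
       - gam n * η z - alph n * z * η1 z - lam0 n * ((2 - del n) * (1 - del n)) * z ^ (-del n)
      ≤ C * z ^ (-delp n) := by
  have hk := kap_pos
  have hl := lam_pos H.hn
  have hD := del_gt H.hn
  have hn := H.hn
  have hl0 := lam0_nonneg hn
  have hga := gam_pos n
  have hal := alph_pos hn
  obtain ⟨hp1, hp2, hp3, -⟩ := delp_facts H.hn he
  obtain ⟨Cw, hCw, z1, hz1, hw⟩ := H.w_bound he
  obtain ⟨Cd, hCd, hd⟩ := H.deriv_bound
  obtain ⟨Cp, hCp, hpow⟩ := one_add_pow_le n (lam n / kap) (by positivity)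
  set M := n * (del n * (del n + 1)) with hM
  have hMpos : 0 < M := by positivity
  have hk3 : kap3 < 0 := by unfold kap3; linarith
  refine ⟨lam0 n * (M * Cp * (lam n / kap)) + -(2 * n * kap3) * (M / (2 * kap) * Cw) + gam n * Cw + alph n * Cd,
    by have : 0 ≤ -(2 * n * kap3) := by nlinarith [Nat.cast_nonneg (α := ℝ) n]
       positivity, z1, hz1, fun z hz => ?_⟩
  have hz1' : 1 ≤ z := by linarith
  have hz0 : 0 < z := by linarith
  have hE := H.pos z hz0.le
  have hup := H.upper z hz0
  have hu : z ^ (-del n) ≤ 1 := Real.rpow_le_one_of_one_le_of_nonpos hz1' (by linarith)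
  have hu0 : 0 < z ^ (-del n) := by positivity
  have hsp : z ^ (-(2 * del n + 1)) ≤ z ^ (-delp n) :=
    Real.rpow_le_rpow_of_exponent_le hz1' (by linarith)
  have hs := rp_s (n := n) hz0
  have hK1 := KI1 hn hz0
  have hwz := hw z hz
  have hdz := hd z hz1'
  set Z := z ^ (-delp n) with hZ
  have hZ0 : 0 < Z := by positivity
  set S := z ^ (-(2 * del n + 1)) with hS
  set u := z ^ (-del n) with hu'
  set q := 2 * kap * z * η z + η z ^ 2 with hq
  set g := lam n * u with hg
  have hgpos : 0 < g := by positivity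
  -- P bound
  have hP : (n * q ^ (n - 1) * (2 * kap * z + 2 * η z)) * z ^ 2 ≤ M + M * Cp * (lam n / kap) * u / z := by
    set x := lam n / kap * (u / z) with hx
    have hx0 : 0 ≤ x := by positivity
    have hxX : x ≤ lam n / kap := by
      have : u / z ≤ 1 := by rw [div_le_one hz0]; linarith
      calc x ≤ lam n / kap * 1 := by rw [hx]; gcongr
        _ = _ := mul_one _
    have hpx := hpow x hx0 hxX
    have hgx : kap * z * x = g := by rw [hx, hg]; field_simp
    have b1 : q ≤ 2 * kap * z * g * (1 + x) := by
      have : 2 * kap * z * g * (1 + x) = 2 * kap * z * g + 2 * g ^ 2 := by rw [← hgx]; ring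
      rw [this, hq]
      have c1 : 2 * kap * z * η z ≤ 2 * kap * z * g := by gcongr
      have c2 : η z ^ 2 ≤ g ^ 2 := by gcongr
      nlinarith
    have b2 : 2 * kap * z + 2 * η z ≤ 2 * kap * z * (1 + x) := by
      have : 2 * kap * z * (1 + x) = 2 * kap * z + 2 * g := by rw [← hgx]; ring
      linarith
    have hq0 : 0 ≤ q := by positivity
    calc (n * q ^ (n - 1) * (2 * kap * z + 2 * η z)) * z ^ 2
        ≤ (n * (2 * kap * z * g * (1 + x)) ^ (n - 1) * (2 * kap * z * (1 + x))) * z ^ 2 := by gcongr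
      _ = n * ((2 * kap * z) ^ (n - 1) * g ^ (n - 1) * (2 * kap * z)) * z ^ 2 * ((1 + x) ^ (n - 1) * (1 + x)) := by
          rw [mul_pow, mul_pow _ g]; ring
      _ = M * (1 + x) ^ n := by
          rw [hK1, ← pow_succ, Nat.sub_add_cancel (by omega), hM]; field_simp
      _ ≤ M * (1 + Cp * x) := by gcongr
      _ = _ := by rw [hx]; ring
  have hT1 : (n * q ^ (n - 1) * (2 * kap * z + 2 * η z)) * lam0 n * z ^ 2 * u
      ≤ lam0 n * (M * u) + lam0 n * (M * Cp * (lam n / kap)) * Z := by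
    have c1 := mul_le_mul_of_nonneg_left hP (mul_nonneg hl0 hu0.le)
    have c2 : lam0 n * u * (M + M * Cp * (lam n / kap) * u / z)
      = lam0 n * (M * u) + lam0 n * (M * Cp * (lam n / kap)) * S := by rw [hs]; ring
    have c3 : lam0 n * (M * Cp * (lam n / kap)) * S ≤ lam0 n * (M * Cp * (lam n / kap)) * Z := by
      gcongr
    calc _ = lam0 n * u * (n * q ^ (n - 1) * (2 * kap * z + 2 * η z) * z ^ 2) := by ring
      _ ≤ _ := by linarith
  have hT2 : del n * (del n + 1) * g / (2 * kap) - M / (2 * kap) * Cw * Z ≤ q ^ (n - 1) * z ^ 3 * η z := by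
    have c1 : (2 * kap * z * η z) ^ (n - 1) ≤ q ^ (n - 1) := by
      apply pow_le_pow_left₀ (by positivity); rw [hq]; nlinarith
    have c2 : (2 * kap * z) ^ (n - 1) * g ^ (n - 1) * z ^ 3 = del n * (del n + 1) / (2 * kap) := by
      have : (2 * kap * z) ^ (n - 1) * g ^ (n - 1) * z ^ 3 =
        ((2 * kap * z) ^ (n - 1) * g ^ (n - 1) * (2 * kap * z)) * z ^ 2 / (2 * kap) := by field_simp
      rw [this, hK1]; field_simp
    have c3 := pow_sub_pow_le' n g (η z) hE.le hup
    have c4 : g ^ n = g ^ (n - 1) * g := by rw [← pow_succ, Nat.sub_add_cancel (by omega)]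
    have c5 : η z ^ n = η z ^ (n - 1) * η z := by rw [← pow_succ, Nat.sub_add_cancel (by omega)]
    have c6 : g ^ (n - 1) * g - n * g ^ (n - 1) * (g - η z) ≤ η z ^ (n - 1) * η z := by
      rw [← c4, ← c5]; linarith
    have c7 := mul_le_mul_of_nonneg_left c6 (by positivity : 0 ≤ (2 * kap * z) ^ (n - 1) * z ^ 3)
    have c8 : (2 * kap * z) ^ (n - 1) * z ^ 3 * (g ^ (n - 1) * g - n * g ^ (n - 1) * (g - η z))
      = del n * (del n + 1) / (2 * kap) * g - n * (del n * (del n + 1) / (2 * kap)) * (g - η z) := by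
      rw [← c2]; ring
    have c9 : n * (del n * (del n + 1) / (2 * kap)) * (g - η z) ≤ M / (2 * kap) * Cw * Z := by
      calc n * (del n * (del n + 1) / (2 * kap)) * (g - η z) ≤ n * (del n * (del n + 1) / (2 * kap)) * (Cw * Z) := by gcongr
        _ = _ := by rw [hM]; ring
    have c10 : (2 * kap * z * η z) ^ (n - 1) * z ^ 3 * η z ≤ q ^ (n - 1) * z ^ 3 * η z := by gcongr
    have c11 : (2 * kap * z * η z) ^ (n - 1) * z ^ 3 * η z = (2 * kap * z) ^ (n - 1) * z ^ 3 * (η z ^ (n - 1) * η z) := by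
      rw [mul_pow]; ring
    have c12 : del n * (del n + 1) / (2 * kap) * g = del n * (del n + 1) * g / (2 * kap) := by ring
    linarith
  have hT2' : 2 * n * kap3 * q ^ (n - 1) * z ^ 3 * η z ≤
      2 * n * kap3 * (del n * (del n + 1) * g / (2 * kap)) + -(2 * n * kap3) * (M / (2 * kap) * Cw) * Z := by
    have c0 : 2 * n * kap3 ≤ 0 := by nlinarith [Nat.cast_nonneg (α := ℝ) n]
    have := mul_le_mul_of_nonpos_left hT2 c0
    have e : 2 * n * kap3 * q ^ (n - 1) * z ^ 3 * η z = 2 * n * kap3 * (q ^ (n - 1) * z ^ 3 * η z) := by ring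
    rw [e]; linarith
  have hT3 : - gam n * η z ≤ -gam n * g + gam n * Cw * Z := by
    have := mul_le_mul_of_nonneg_left hwz hga.le
    linarith
  have hT4 : - alph n * z * η1 z ≤ alph n * (del n * g) + alph n * Cd * Z := by
    have c1 := mul_le_mul_of_nonneg_left hdz hal.le
    have c2 : alph n * (Cd * S) ≤ alph n * (Cd * Z) := by gcongr
    have c3 : alph n * (del n * lam n * u + Cd * S) = alph n * (del n * g) + alph n * (Cd * S) := by rw [hg]; ring
    linarith
  have hlead : lam0 n * (M * u) + 2 * n * kap3 * (del n * (del n + 1) * g / (2 * kap)) + -gam n * g + alph n * (del n * g)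
      - lam0 n * ((2 - del n) * (1 - del n)) * u = 0 := by
    have := lam0_eq hn
    rw [← hM] at this
    have c : lam0 n * (M * u) + 2 * n * kap3 * (del n * (del n + 1) * g / (2 * kap)) + -gam n * g + alph n * (del n * g)
      - lam0 n * ((2 - del n) * (1 - del n)) * u = u * (lam0 n * (M - (2 - del n) * (1 - del n)) -
        (-2 * n * kap3 * (del n * (del n + 1)) * (lam n / (2 * kap))
        + lam n * (gam n - alph n * del n))) := by rw [hg]; ring
    rw [c, this]; ring
  linarith

set_option maxHeartbeats 1000000 in
lemma phi2_bound {n : ℕ} {η η1 : ℝ → ℝ} (H : EtaHyp n η η1) (he : Even n) (h h1 : ℝ → ℝ)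
    (hh1 : ∀ z > 0, HasDerivAt h (h1 z) z)
    (hh2 : ∀ z > 0, HasDerivAt h1 ((n : ℝ) * (2 * kap * z * η z + (η z) ^ 2) ^ (n - 1)
          * ((2 * kap * z + 2 * η z) * h z + 2 * kap3 * z ^ 3 * η z) - gam n * η z - alph n * z * η1 z) z)
    (hlim : Tendsto (fun z : ℝ => h z - lam0 n * z ^ (2 - del n)) atTop (𝓝 0)) :
    ∃ C > 0, ∃ z1 ≥ 1, ∀ z ≥ z1, -(C * z ^ (2 - delp n)) ≤ phi2 n h z := by
  have hk := kap_pos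
  have hl := lam_pos H.hn
  have hD := del_gt H.hn
  have hn := H.hn
  obtain ⟨hp1, hp2, hp3, -⟩ := delp_facts H.hn he
  obtain ⟨CR, hCR, z0, hz0, hR⟩ := H.resid he
  obtain ⟨b, hb, hcoef⟩ := H.coef
  set p := delp n with hp
  set M := n * (del n * (del n + 1)) with hM
  have hMpos : 0 < M := by positivity
  set z1 := max z0 (b + M * b) with hz1
  have hz1a : z0 ≤ z1 := le_max_left _ _
  have hz1b : b + M * b ≤ z1 := le_max_right _ _
  have hMb : 0 < M * b := by positivity
  have hz1pos : 0 < z1 := by linarith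
  have hG : 0 < z1 ^ (-(p - 2)) := by positivity
  set C := max (CR + 1) ((lam0 n * z1 ^ (-(del n - 2)) - h z1) / z1 ^ (-(p - 2))) with hC
  have hCa : CR + 1 ≤ C := le_max_left _ _
  have hCb : (lam0 n * z1 ^ (-(del n - 2)) - h z1) / z1 ^ (-(p - 2)) ≤ C := le_max_right _ _
  have hCpos : 0 < C := by linarith
  refine ⟨C, hCpos, z1, by linarith, fun z hz => ?_⟩
  have := max_prin (fun y => lam0 n * y ^ (-(del n - 2)) - h y - C * y ^ (-(p - 2)))
    (fun y => lam0 n * (-(del n - 2) * y ^ (-(del n - 2)) / y) - h1 y - C * (-(p - 2) * y ^ (-(p - 2)) / y))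
    (fun y => lam0 n * ((del n - 2) * (del n - 2 + 1) * y ^ (-(del n - 2)) / y ^ 2) -
       ((n : ℝ) * (2 * kap * y * η y + (η y) ^ 2) ^ (n - 1)
          * ((2 * kap * y + 2 * η y) * h y + 2 * kap3 * y ^ 3 * η y) - gam n * η y - alph n * y * η1 y)
       - C * ((p - 2) * (p - 2 + 1) * y ^ (-(p - 2)) / y ^ 2)) z1 ?_ ?_ ?_ ?_ ?_ ?_ z hz
  · rw [neg_sub, neg_sub] at this
    unfold phi2
    linarith
  · intro y hy
    have hy0 : 0 < y := lt_of_lt_of_le hz1pos hy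
    exact ((((hd_rp _ hy0).const_mul _).fun_sub (hh1 y hy0)).fun_sub
      ((hd_rp _ hy0).const_mul _)).continuousAt.continuousWithinAt
  · intro y hy
    have hy0 : 0 < y := lt_trans hz1pos hy
    exact ((((hd_rp _ hy0).const_mul _).fun_sub (hh1 y hy0)).fun_sub ((hd_rp _ hy0).const_mul _))
  · intro y hy
    have hy0 : 0 < y := lt_trans hz1pos hy
    exact ((((hd_rp2 _ hy0).const_mul _).fun_sub (hh2 y hy0)).fun_sub ((hd_rp2 _ hy0).const_mul _))
  · rw [div_le_iff₀ hG] at hCb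
    linarith
  · have e1 := hlim.neg.sub ((tend_rp (by linarith : 0 < p - 2)).const_mul C)
    simp only [neg_sub, mul_zero, sub_zero, neg_zero] at e1 ⊢
    exact e1
  · intro y hy hpos
    have hy0 : 0 < y := lt_trans hz1pos hy
    have hy1 : 1 ≤ y := by linarith
    have hE := H.pos y hy0.le
    have e1 : y ^ (-(del n - 2)) = y ^ 2 * y ^ (-del n) := by
      rw [← Real.rpow_natCast y 2, ← Real.rpow_add hy0]; congr 1; push_cast; ring
    have e2 : y ^ (-(p - 2)) = y ^ 2 * y ^ (-p) := by
      rw [← Real.rpow_natCast y 2, ← Real.rpow_add hy0]; congr 1; push_cast; ring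
    have hRy := hR y (by linarith)
    have hcy := hcoef y hy0
    rw [e1, e2] at hpos ⊢
    have hZ0 : 0 < y ^ (-p) := by positivity
    set Z := y ^ (-p) with hZ
    set u := y ^ (-del n) with hu
    set q := 2 * kap * y * η y + η y ^ 2 with hq
    set P := n * q ^ (n - 1) * (2 * kap * y + 2 * η y) with hP
    have hq0 : 0 ≤ q := by positivity
    have hP1 : n * ((2 * kap * y) ^ n * η y ^ (n - 1)) ≤ P := by
      have c1 : (2 * kap * y * η y) ^ (n - 1) ≤ q ^ (n - 1) := by
        apply pow_le_pow_left₀ (by positivity); rw [hq]; nlinarith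
      calc n * ((2 * kap * y) ^ n * η y ^ (n - 1)) = n * (2 * kap * y * η y) ^ (n - 1) * (2 * kap * y) := by
            rw [mul_pow _ (η y)]
            obtain ⟨m, rfl⟩ : ∃ m, n = m + 1 := ⟨n - 1, by omega⟩
            simp only [Nat.add_sub_cancel]; ring
        _ ≤ _ := by rw [hP]; gcongr; linarith
    have hP0 : 0 ≤ P := by positivity
    have hP2 : M - M * b / y ≤ P * y ^ 2 := by
      have := mul_le_mul_of_nonneg_right (hcy.trans hP1) (by positivity : 0 ≤ y ^ 2)
      refine le_trans (le_of_eq ?_) this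
      field_simp
    have hP3 : M * b / y ≤ 1 := by rw [div_le_one hy0]; linarith
    set f := lam0 n * (y ^ 2 * u) - h y - C * (y ^ 2 * Z) with hf
    have hhy : h y = lam0 n * (y ^ 2 * u) - f - C * (y ^ 2 * Z) := by rw [hf]; ring
    have g1 : 0 ≤ P * f := mul_nonneg hP0 hpos.le
    have g2 : C * Z * (M - 1) ≤ C * Z * (P * y ^ 2) := by
      apply mul_le_mul_of_nonneg_left _ (by positivity); linarith
    have g3 : C * Z * ((p - 2) * (p - 1) + 1) ≤ C * Z * (M - 1) := by
      apply mul_le_mul_of_nonneg_left _ (by positivity); nlinarith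
    have g4 : CR * Z < C * Z := by
      apply mul_lt_mul_of_pos_right _ hZ0; linarith
    have hfin : lam0 n * ((del n - 2) * (del n - 2 + 1) * (y ^ 2 * u) / y ^ 2) -
       ((n : ℝ) * q ^ (n - 1)
          * ((2 * kap * y + 2 * η y) * h y + 2 * kap3 * y ^ 3 * η y) - gam n * η y - alph n * y * η1 y)
       - C * ((p - 2) * (p - 2 + 1) * (y ^ 2 * Z) / y ^ 2)
       = P * f + C * Z * (P * y ^ 2) - (P * lam0 n * y ^ 2 * u
       + 2 * n * kap3 * q ^ (n - 1) * y ^ 3 * η y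
       - gam n * η y - alph n * y * η1 y - lam0 n * ((2 - del n) * (1 - del n)) * u)
       - C * Z * ((p - 2) * (p - 1)) := by
      have a1 : (del n - 2) * (del n - 2 + 1) * (y ^ 2 * u) / y ^ 2 = (2 - del n) * (1 - del n) * u := by
        field_simp; ring
      have a2 : (p - 2) * (p - 2 + 1) * (y ^ 2 * Z) / y ^ 2 = (p - 2) * (p - 1) * Z := by
        field_simp; ring
      rw [a1, a2, hhy, hP]; ring
    rw [hfin]
    linarith

lemma mu1_nonneg {y : ℝ} (hy : 0 ≤ y) : 0 ≤ mu1 y := by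
  unfold mu1
  apply mul_nonneg (by positivity)
  apply intervalIntegral.integral_nonneg (by linarith)
  intro x _; positivity

lemma mu1_le {y : ℝ} (hy : 0 ≤ y) : mu1 y ≤ kap * y := by
  unfold mu1 kap
  have h : ∫ σ in (0:ℝ)..(y / 2), Real.exp (-σ ^ 2) ≤ ∫ σ in (0:ℝ)..(y / 2), (1:ℝ) := by
    apply intervalIntegral.integral_mono_on (by linarith)
    · apply Continuous.intervalIntegrable; fun_prop
    · apply Continuous.intervalIntegrable; fun_prop
    · intro x _
      rw [Real.exp_le_one_iff]; nlinarith [sq_nonneg x]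
  simp only [intervalIntegral.integral_const, sub_zero, smul_eq_mul, mul_one] at h
  calc 2 / Real.sqrt Real.pi * _ ≤ 2 / Real.sqrt Real.pi * (y / 2) := by gcongr
    _ = _ := by ring

lemma mu1_bdd : ∃ U : ℝ, 0 < U ∧ ∀ y ≥ 0, mu1 y ≤ U := by
  refine ⟨2 / Real.sqrt Real.pi * ∫ σ : ℝ, Real.exp (-1 * σ ^ 2), ?_, fun y hy => ?_⟩
  · rw [integral_gaussian]; positivity
  · unfold mu1
    gcongr
    rw [intervalIntegral.integral_of_le (by linarith)]
    have hi := integrable_exp_neg_mul_sq (b := 1) one_pos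
    have := MeasureTheory.setIntegral_le_integral (s := Ioc 0 (y/2)) hi
      (Eventually.of_forall fun x => by positivity)
    simpa using this

set_option maxHeartbeats 1000000 in
lemma mu_lower {n : ℕ} (hn : 4 ≤ n) {μ μ' μ'' : ℝ → ℝ}
    (h1 : ∀ y > 0, HasDerivAt μ (μ' y) y) (h2 : ∀ y > 0, HasDerivAt μ' (μ'' y) y)
    (hpos : ∀ y > 0, 0 < μ y)
    (hode : ∀ y > 0, μ'' y + y / 2 * μ' y + eps n * μ y = (2 * mu1 y * μ y) ^ n)
    (hlim : Tendsto (fun y : ℝ => y ^ del n * μ y) (𝓝[>] 0) (𝓝 (lam n))) :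
    ∀ y, 0 < y → y ≤ 1 → lam n * (y ^ (-del n) - y ^ (-(del n - 2))) ≤ μ y := by
  intro y hy hy1
  have hk := kap_pos
  have hl := lam_pos hn
  have hD := del_gt hn
  have hD2 := del_le hn
  by_contra hcon
  push Not at hcon
  set v : ℝ → ℝ := fun y => lam n * (y ^ (-del n) - y ^ (-(del n - 2))) with hv
  have hve : ∀ x : ℝ, 0 < x → x ^ (-(del n - 2)) = x ^ 2 * x ^ (-del n) := by
    intro x hx
    rw [← Real.rpow_natCast x 2, ← Real.rpow_add hx]; congr 1; push_cast; ring
  have hd1 : ∀ x > 0, HasDerivAt v (lam n * (-del n * x ^ (-del n) / x - -(del n - 2) * x ^ (-(del n - 2)) / x)) x :=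
    fun x hx => ((hd_rp _ hx).fun_sub (hd_rp _ hx)).const_mul _
  have hd2 : ∀ x > 0, HasDerivAt (fun x => (lam n * (-del n * x ^ (-del n) / x - -(del n - 2) * x ^ (-(del n - 2)) / x)))
      (lam n * (del n * (del n + 1) * x ^ (-del n) / x ^ 2 - (del n - 2) * (del n - 2 + 1) * x ^ (-(del n - 2)) / x ^ 2)) x :=
    fun x hx => ((hd_rp2 _ hx).fun_sub (hd_rp2 _ hx)).const_mul _
  have hr : 1 < v y / μ y := by rw [one_lt_div (hpos y hy)]; exact hcon
  have hlim2 : Tendsto (fun y => v y / μ y) (𝓝[>] 0) (𝓝 1) := by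
    have t1 : Tendsto (fun x : ℝ => lam n * (1 - x ^ 2)) (𝓝[>] 0) (𝓝 (lam n)) := by
      have : Tendsto (fun x : ℝ => lam n * (1 - x ^ 2)) (𝓝 0) (𝓝 (lam n * (1 - 0 ^ 2))) := by
        apply Continuous.tendsto; fun_prop
      simp only [ne_eq, OfNat.ofNat_ne_zero, not_false_eq_true, zero_pow, sub_zero, mul_one] at this
      exact this.mono_left nhdsWithin_le_nhds
    have t2 := t1.div hlim hl.ne'
    rw [div_self hl.ne'] at t2
    refine t2.congr' ?_
    filter_upwards [self_mem_nhdsWithin] with x hx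
    have hx0 : 0 < x := hx
    have := hpos x hx0
    simp only [hv, Pi.div_apply]
    rw [hve x hx0, Real.rpow_neg hx0.le]
    have : 0 < x ^ del n := by positivity
    field_simp
  obtain ⟨ya, hya1, hya2⟩ := ((hlim2.eventually (gt_mem_nhds hr)).and (Ioo_mem_nhdsGT hy)).exists
  have hcont : ContinuousOn (fun y => v y / μ y) (Icc ya 1) := by
    intro x hx
    have hx0 : 0 < x := lt_of_lt_of_le hya2.1 hx.1
    exact ((hd1 x hx0).continuousAt.div (h1 x hx0).continuousAt (hpos x hx0).ne').continuousWithinAt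
  obtain ⟨m, hm, hmax⟩ := isCompact_Icc.exists_isMaxOn (s := Icc ya 1) ⟨y, hya2.2.le, hy1⟩ hcont
  have hmy : v y / μ y ≤ v m / μ m := hmax ⟨hya2.2.le, hy1⟩
  have hma : ya < m := lt_of_le_of_ne hm.1 (by rintro rfl; linarith)
  have hm1 : m < 1 := lt_of_le_of_ne hm.2 (by
    rintro rfl
    have : v 1 = 0 := by simp [hv]
    rw [this, zero_div] at hmy; linarith)
  have hm0 : 0 < m := lt_trans hya2.1 hma
  set ρ := v m / μ m with hρ
  have hρ1 : 1 < ρ := by linarith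
  have hμm := hpos m hm0
  have hvm : v m = ρ * μ m := by rw [hρ]; field_simp
  have hloc : IsLocalMax (fun x => v x - ρ * μ x) m := by
    filter_upwards [Icc_mem_nhds hma hm1] with x hx
    have hx0 : 0 < x := lt_of_lt_of_le hya2.1 hx.1
    have : v x / μ x ≤ ρ := hmax hx
    rw [div_le_iff₀ (hpos x hx0)] at this
    linarith
  obtain ⟨f1, f2⟩ := second_deriv_nonpos _ _ _ m
    ((lt_mem_nhds hm0).mono fun x hx => (hd1 x hx).fun_sub ((h1 x hx).const_mul ρ))
    ((hd2 m hm0).fun_sub ((h2 m hm0).const_mul ρ)) hloc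
  have ho := hode m hm0
  have hle : (2 * mu1 m * μ m) ^ n ≤ (2 * kap * m * μ m) ^ n := by
    have := mu1_nonneg hm0.le
    have := mu1_le hm0.le
    apply pow_le_pow_left₀ (by positivity)
    have : 2 * mu1 m ≤ 2 * kap * m := by linarith
    gcongr
  have hKI := KI2 hn hm0
  have hu0 : 0 < m ^ (-del n) := by positivity
  rw [hve m hm0] at f1 f2
  have hvm2 : v m = lam n * m ^ (-del n) * (1 - m ^ 2) := by
    simp only [hv]; rw [hve m hm0]; ring
  set u := m ^ (-del n) with hu
  have hm2 : m ^ 2 < 1 := by nlinarith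
  have hq : (2 * kap * m * v m) ^ n ≤ del n * (del n + 1) * lam n * u / m ^ 2 * (1 - m ^ 2) := by
    have : 2 * kap * m * v m = 2 * kap * m * (lam n * u) * (1 - m ^ 2) := by rw [hvm2]; ring
    rw [this, mul_pow, hKI]
    have : (1 - m ^ 2) ^ n ≤ 1 - m ^ 2 :=
      pow_le_of_le_one (by linarith) (by nlinarith [sq_nonneg m]) (by omega)
    gcongr
  have heps : 0 < eps n := by unfold eps; have := nsub_pos hn; positivity
  have hsub : (2 * kap * m * v m) ^ n ≤ lam n * (del n * (del n + 1) * u / m ^ 2 - (del n - 2) * (del n - 2 + 1) * (m ^ 2 * u) / m ^ 2)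
      + m / 2 * (lam n * (-del n * u / m - -(del n - 2) * (m ^ 2 * u) / m)) + eps n * v m := by
    refine hq.trans ?_
    have e : lam n * (del n * (del n + 1) * u / m ^ 2 - (del n - 2) * (del n - 2 + 1) * (m ^ 2 * u) / m ^ 2)
      + m / 2 * (lam n * (-del n * u / m - -(del n - 2) * (m ^ 2 * u) / m)) + eps n * v m
      - del n * (del n + 1) * lam n * u / m ^ 2 * (1 - m ^ 2)
      = lam n * u * ((2 - del n) * (del n - 1) + del n * (del n + 1) - del n / 2 - (2 - del n) * m ^ 2 / 2
        + eps n * (1 - m ^ 2)) := by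
      rw [hvm2]; field_simp; ring
    have p1 : 0 ≤ (2 - del n) * (del n - 1) := mul_nonneg (by linarith) (by linarith)
    have p2 : 0 ≤ eps n * (1 - m ^ 2) := mul_nonneg heps.le (by linarith)
    have p3 : 1 ≤ del n * (del n + 1) - del n / 2 := by nlinarith
    have p4 : (2 - del n) * m ^ 2 ≤ 1 := by nlinarith
    have : 0 ≤ lam n * u * ((2 - del n) * (del n - 1) + del n * (del n + 1) - del n / 2 - (2 - del n) * m ^ 2 / 2
        + eps n * (1 - m ^ 2)) := by
      apply mul_nonneg (by positivity); linarith
    linarith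
  have hstrict : ρ * (2 * kap * m * μ m) ^ n < (2 * kap * m * v m) ^ n := by
    have : 2 * kap * m * v m = ρ * (2 * kap * m * μ m) := by rw [hvm]; ring
    rw [this, mul_pow ρ]
    have h8 : ρ < ρ ^ n := lt_self_pow₀ hρ1 (by omega)
    have h9 : 0 < (2 * kap * m * μ m) ^ n := by positivity
    exact mul_lt_mul_of_pos_right h8 h9
  have hA : ρ * (μ'' m + m / 2 * μ' m + eps n * μ m) ≤ ρ * (2 * kap * m * μ m) ^ n := by
    rw [ho]; gcongr
  have hf1 : m / 2 * (lam n * (-del n * u / m - -(del n - 2) * (m ^ 2 * u) / m) - ρ * μ' m) = 0 := by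
    rw [f1, mul_zero]
  have hev : eps n * v m = eps n * (ρ * μ m) := by rw [hvm]
  linarith

lemma mu3_lower {n : ℕ} (hn : 4 ≤ n) {μ : ℝ → ℝ} (hpos : ∀ y > 0, 0 < μ y)
    (hlow : ∀ y, 0 < y → y ≤ 1 → lam n * (y ^ (-del n) - y ^ (-(del n - 2))) ≤ μ y) :
    ∀ y ≥ 0, -(|μ 0| + lam n) ≤ mu3 n μ y := by
  intro y hy
  have hl := lam_pos hn
  have hD := del_gt hn
  have hD2 := del_le hn
  have h0 := neg_abs_le (μ 0)
  have h00 := abs_nonneg (μ 0)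
  unfold mu3
  rcases eq_or_lt_of_le hy with rfl | hy0
  · rw [Real.zero_rpow (by linarith)]; linarith
  rcases le_total y 1 with h1 | h1
  · have := hlow y hy0 h1
    have h2 : y ^ (-(del n - 2)) ≤ 1 := Real.rpow_le_one hy h1 (by linarith)
    nlinarith
  · have := hpos y hy0
    have h2 : y ^ (-del n) ≤ 1 := Real.rpow_le_one_of_one_le_of_nonpos h1 (by linarith)
    nlinarith

lemma phi2_bdd {n : ℕ} (hn : 4 ≤ n) {h : ℝ → ℝ} (hc : ContinuousOn h (Ici 0))
    (hlim : Tendsto (fun z : ℝ => h z - lam0 n * z ^ (2 - del n)) atTop (𝓝 0)) :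
    ∃ C > 0, ∀ z ≥ 0, -C ≤ phi2 n h z := by
  have hD2 := del_le hn
  have hcont : ContinuousOn (phi2 n h) (Ici 0) := by
    unfold phi2
    apply ContinuousOn.add _ hc
    apply ContinuousOn.mul continuousOn_const
    exact fun z _ => (Real.continuousAt_rpow_const z _ (Or.inr (by linarith))).continuousWithinAt
  obtain ⟨Z, hZ⟩ := eventually_atTop.1 (hlim.eventually (lt_mem_nhds (show (-1:ℝ) < 0 by norm_num)))
  obtain ⟨B, hB⟩ := (isCompact_Icc (a := (0:ℝ)) (b := Z)).bddBelow_image (hcont.mono Icc_subset_Ici_self)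
  refine ⟨|B| + 1, by positivity, fun z hz => ?_⟩
  rcases le_total z Z with h1 | h1
  · have := hB (mem_image_of_mem _ (show z ∈ Icc 0 Z from ⟨hz, h1⟩))
    linarith [neg_abs_le B]
  · have := hZ z h1
    unfold phi2
    linarith [abs_nonneg B]

set_option maxHeartbeats 1000000 in
lemma phi_lower {n : ℕ} {η η1 μ h : ℝ → ℝ} (H : EtaHyp n η η1) (he : Even n)
    (hpos : ∀ y > 0, 0 < μ y)
    (hlow : ∀ y, 0 < y → y ≤ 1 → lam n * (y ^ (-del n) - y ^ (-(del n - 2))) ≤ μ y)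
    (hphi : ∃ C > 0, ∃ z1 ≥ 1, ∀ z ≥ z1, -(C * z ^ (2 - delp n)) ≤ phi2 n h z)
    (hphib : ∃ C > 0, ∀ z ≥ 0, -C ≤ phi2 n h z) :
    ∃ T0 ≥ 1, ∃ C > 0, ∀ T ≥ T0, ∀ y ≥ 0,
      -(C * T ^ (-(1 + delp n))) ≤
        T ^ (-1:ℝ) * η (y * T) + T ^ (-(1 + del n)) * mu3 n μ y + T ^ (-3:ℝ) * phi2 n h (y * T) := by
  have hn := H.hn
  have hl := lam_pos hn
  have hD := del_gt hn
  have hD2 := del_le hn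
  obtain ⟨hp1, hp2, -⟩ := delp_facts hn he
  obtain ⟨a, ha, hlowη⟩ := H.lower
  obtain ⟨C1, hC1, z1, hz1, hw⟩ := H.w_bound he
  obtain ⟨C2, hC2, z2, hz2, hphi⟩ := hphi
  obtain ⟨C4, hC4, hphib⟩ := hphib
  have hmu3 := mu3_lower hn hpos hlow
  set C3 := |μ 0| + lam n with hC3
  have hC3pos : 0 < C3 := by positivity
  set p := delp n with hp
  set C := max C1 C2 with hC
  have hCpos : 0 < C := lt_of_lt_of_le hC1 (le_max_left _ _)
  have hC1C : C1 ≤ C := le_max_left _ _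
  have hC2C : C2 ≤ C := le_max_right _ _
  have hlimp : Tendsto (fun z : ℝ => z ^ (-(p - del n))) atTop (𝓝 0) := tend_rp (by linarith)
  obtain ⟨z3, hz3⟩ := eventually_atTop.1 (hlimp.eventually (gt_mem_nhds (by positivity : 0 < lam n / (4 * C))))
  set z0 := max (max z1 z2) z3 with hz0
  have hz01 : z1 ≤ z0 := le_trans (le_max_left _ _) (le_max_left _ _)
  have hz02 : z2 ≤ z0 := le_trans (le_max_right _ _) (le_max_left _ _)
  have hz03 : z3 ≤ z0 := le_max_right _ _
  have hz0pos : 0 < z0 := by linarith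
  set m := lam n * (z0 + a) ^ (-del n) with hm
  have hmpos : 0 < m := by positivity
  set C5 := C * ((1/2:ℝ) ^ (-p) + (1/2:ℝ) ^ (2 - p)) with hC5
  have hC5pos : 0 < C5 := by positivity
  refine ⟨max 1 ((C3 + C4) / m), le_max_left _ _, C5, hC5pos, fun T hT y hy => ?_⟩
  have hT1 : 1 ≤ T := le_trans (le_max_left _ _) hT
  have hT2 : (C3 + C4) / m ≤ T := le_trans (le_max_right _ _) hT
  have hT0 : 0 < T := by linarith
  have hRpos : 0 < C5 * T ^ (-(1 + p)) := by positivity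
  rcases lt_or_ge (y * T) z0 with hzA | hzB
  · -- region A
    have hz : 0 ≤ y * T := by positivity
    have k1 := hlowη (y * T) hz
    have k2 : m ≤ η (y * T) := by
      refine le_trans ?_ k1
      rw [hm]
      have : (z0 + a) ^ (-del n) ≤ (y * T + a) ^ (-del n) :=
        Real.rpow_le_rpow_of_nonpos (by linarith) (by linarith) (by linarith)
      gcongr
    have k3 := hmu3 y hy
    have k4 := hphib (y * T) hz
    have t1 : T ^ (-(1 + del n)) ≤ T ^ (-2:ℝ) := Real.rpow_le_rpow_of_exponent_le hT1 (by linarith)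
    have t2 : T ^ (-3:ℝ) ≤ T ^ (-2:ℝ) := Real.rpow_le_rpow_of_exponent_le hT1 (by linarith)
    have t3 : T ^ (-1:ℝ) = T * T ^ (-2:ℝ) := by
      have : T * T ^ (-2:ℝ) = T ^ (1:ℝ) * T ^ (-2:ℝ) := by rw [Real.rpow_one]
      rw [this, ← Real.rpow_add hT0]; norm_num
    have s1 : 0 < T ^ (-(1 + del n)) := by positivity
    have s2 : 0 < T ^ (-3:ℝ) := by positivity
    have s3 : 0 < T ^ (-2:ℝ) := by positivity
    rw [div_le_iff₀ hmpos] at hT2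
    have q1 : T ^ (-1:ℝ) * m ≤ T ^ (-1:ℝ) * η (y * T) := by gcongr
    have q2 : -(T ^ (-2:ℝ) * C3) ≤ T ^ (-(1 + del n)) * mu3 n μ y := by nlinarith
    have q3 : -(T ^ (-2:ℝ) * C4) ≤ T ^ (-3:ℝ) * phi2 n h (y * T) := by nlinarith
    have q4 : T ^ (-2:ℝ) * (C3 + C4) ≤ T ^ (-1:ℝ) * m := by
      rw [t3]; nlinarith
    linarith
  · have hy0 : 0 < y := by
      by_contra hc
      have : y = 0 := le_antisymm (not_lt.1 hc) hy
      rw [this, zero_mul] at hzB; linarith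
    have hz : 0 < y * T := by positivity
    have k1 := hw (y * T) (by linarith)
    have k2 := hphi (y * T) (by linarith)
    have r1 : T ^ (-(1 + del n)) * y ^ (-del n) = T ^ (-1:ℝ) * (y * T) ^ (-del n) := by
      rw [Real.mul_rpow hy hT0.le]
      have : T ^ (-(1 + del n)) = T ^ (-1:ℝ) * T ^ (-del n) := by
        rw [← Real.rpow_add hT0]; congr 1; ring
      rw [this]; ring
    have r2 : T ^ (-3:ℝ) * (y * T) ^ (2 - p) = T ^ (-1:ℝ) * (y * T) ^ (-p) * y ^ 2 := by
      have e1 : (y * T) ^ (2 - p) = (y * T) ^ 2 * (y * T) ^ (-p) := by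
        rw [← Real.rpow_natCast (y * T) 2, ← Real.rpow_add hz]; congr 1
      have e2 : T ^ (-1:ℝ) = T ^ (-3:ℝ) * T ^ 2 := by
        rw [← Real.rpow_natCast T 2, ← Real.rpow_add hT0]; norm_num
      rw [e1, e2]; ring
    have sT : 0 < T ^ (-1:ℝ) := by positivity
    have sp : 0 < (y * T) ^ (-p) := by positivity
    have main : T ^ (-(1 + del n)) * μ y - C * (T ^ (-1:ℝ) * (y * T) ^ (-p) * (1 + y ^ 2)) ≤
        T ^ (-1:ℝ) * η (y * T) + T ^ (-(1 + del n)) * mu3 n μ y + T ^ (-3:ℝ) * phi2 n h (y * T) := by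
      have q1 : T ^ (-1:ℝ) * (lam n * (y * T) ^ (-del n) - C * (y * T) ^ (-p)) ≤ T ^ (-1:ℝ) * η (y * T) := by
        apply mul_le_mul_of_nonneg_left _ sT.le
        have : C1 * (y * T) ^ (-p) ≤ C * (y * T) ^ (-p) := by gcongr
        linarith
      have q3 : -(C * (T ^ (-3:ℝ) * (y * T) ^ (2 - p))) ≤ T ^ (-3:ℝ) * phi2 n h (y * T) := by
        have : C2 * (y * T) ^ (2 - p) ≤ C * (y * T) ^ (2 - p) := by gcongr
        have := mul_le_mul_of_nonneg_left (show -(C * (y * T) ^ (2 - p)) ≤ phi2 n h (y * T) by linarith)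
          (by positivity : 0 ≤ T ^ (-3:ℝ))
        linarith
      rw [r2] at q3
      have q2 : T ^ (-(1 + del n)) * mu3 n μ y = T ^ (-(1 + del n)) * μ y - lam n * (T ^ (-1:ℝ) * (y * T) ^ (-del n)) := by
        unfold mu3; rw [← r1]; ring
      rw [q2]
      linarith
    refine le_trans ?_ main
    rcases le_total y (1/2) with hyh | hyh
    · -- region B
      have b1 := hlow y hy0 (by linarith)
      have e1 : y ^ (-(del n - 2)) = y ^ 2 * y ^ (-del n) := by
        rw [← Real.rpow_natCast y 2, ← Real.rpow_add hy0]; congr 1; push_cast; ring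
      rw [e1] at b1
      have su : 0 < y ^ (-del n) := by positivity
      have hy2 : y ^ 2 ≤ 1 / 4 := by nlinarith
      have b2 : lam n / 2 * y ^ (-del n) ≤ μ y := by
        refine le_trans ?_ b1
        have : lam n * (y ^ (-del n) - y ^ 2 * y ^ (-del n)) = lam n * y ^ (-del n) * (1 - y ^ 2) := by ring
        rw [this]
        have : 0 < lam n * y ^ (-del n) := by positivity
        nlinarith
      have b3 : lam n / 2 * (T ^ (-1:ℝ) * (y * T) ^ (-del n)) ≤ T ^ (-(1 + del n)) * μ y := by
        rw [← r1]
        have := mul_le_mul_of_nonneg_left b2 (by positivity : 0 ≤ T ^ (-(1 + del n)))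
        linarith
      have b4 : (y * T) ^ (-p) = (y * T) ^ (-(p - del n)) * (y * T) ^ (-del n) := by
        rw [← Real.rpow_add hz]; congr 1; ring
      have b5 := hz3 (y * T) (by linarith)
      have sd : 0 < (y * T) ^ (-del n) := by positivity
      have b6 : (y * T) ^ (-p) ≤ lam n / (4 * C) * (y * T) ^ (-del n) := by
        rw [b4]; exact mul_le_mul_of_nonneg_right b5.le sd.le
      have b7 : C * (T ^ (-1:ℝ) * (y * T) ^ (-p) * (1 + y ^ 2)) ≤
          C * (T ^ (-1:ℝ) * (lam n / (4 * C) * (y * T) ^ (-del n)) * 2) := by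
        gcongr; linarith
      have b8 : C * (T ^ (-1:ℝ) * (lam n / (4 * C) * (y * T) ^ (-del n)) * 2)
        = lam n / 2 * (T ^ (-1:ℝ) * (y * T) ^ (-del n)) := by field_simp; norm_num
      linarith
    · -- region C
      have c0 : 0 < T ^ (-(1 + del n)) * μ y := mul_pos (by positivity) (hpos y hy0)
      have c1 : y ^ (-p) ≤ (1/2:ℝ) ^ (-p) :=
        Real.rpow_le_rpow_of_nonpos (by norm_num) hyh (by linarith)
      have c2 : y ^ (2 - p) ≤ (1/2:ℝ) ^ (2 - p) :=
        Real.rpow_le_rpow_of_nonpos (by norm_num) hyh (by linarith)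
      have e1 : y ^ (2 - p) = y ^ 2 * y ^ (-p) := by
        rw [← Real.rpow_natCast y 2, ← Real.rpow_add hy0]; congr 1
      have e2 : T ^ (-1:ℝ) * (y * T) ^ (-p) * (1 + y ^ 2) = T ^ (-(1 + p)) * (y ^ (-p) + y ^ (2 - p)) := by
        have : T ^ (-(1 + p)) = T ^ (-1:ℝ) * T ^ (-p) := by
          rw [← Real.rpow_add hT0]; congr 1; ring
        rw [Real.mul_rpow hy hT0.le, this, e1]; ring
      have c3 : C * (T ^ (-1:ℝ) * (y * T) ^ (-p) * (1 + y ^ 2)) ≤ C5 * T ^ (-(1 + p)) := by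
        rw [e2, hC5]
        calc C * (T ^ (-(1 + p)) * (y ^ (-p) + y ^ (2 - p)))
            ≤ C * (T ^ (-(1 + p)) * ((1/2:ℝ) ^ (-p) + (1/2:ℝ) ^ (2 - p))) := by gcongr
          _ = _ := by ring
      linarith

lemma c2_within {f : ℝ → ℝ} (hf : ContDiffOn ℝ 2 f (Ici 0)) :
    ∀ z > 0, HasDerivAt f (derivWithin f (Ici 0) z) z ∧
      HasDerivAt (derivWithin f (Ici 0)) (derivWithin (derivWithin f (Ici 0)) (Ici 0) z) z := by
  intro z hz
  have hz' : z ∈ Ici (0:ℝ) := le_of_lt hz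
  have h1 : ContDiffOn ℝ 1 (derivWithin f (Ici 0)) (Ici 0) :=
    hf.derivWithin (uniqueDiffOn_Ici 0) (by norm_num)
  exact ⟨((hf.differentiableOn (by norm_num)) z hz').hasDerivWithinAt.hasDerivAt (Ici_mem_nhds hz),
    ((h1.differentiableOn (by norm_num)) z hz').hasDerivWithinAt.hasDerivAt (Ici_mem_nhds hz)⟩

lemma c2_open {f : ℝ → ℝ} (hf : ContDiffOn ℝ 2 f (Ioi 0)) :
    ∀ z > 0, HasDerivAt f (deriv f z) z ∧ HasDerivAt (deriv f) (deriv (deriv f) z) z := by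
  intro z hz
  have h1 : ContDiffOn ℝ 1 (deriv f) (Ioi 0) := hf.deriv_of_isOpen isOpen_Ioi (by norm_num)
  exact ⟨((hf.differentiableOn (by norm_num)).differentiableAt (Ioi_mem_nhds hz)).hasDerivAt,
    ((h1.differentiableOn (by norm_num)).differentiableAt (Ioi_mem_nhds hz)).hasDerivAt⟩


/-- For n even, n ≥ 4, the negative part of the potential V̂ is bounded by
c t^{−γ(n−1)(δ'+1)} for all large times. -/
theorem potential_negative_part_bound_even (n : ℕ) (hn : 4 ≤ n) (heven : Even n)
    (η μ h : ℝ → ℝ)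
    (hη : IsReactiveProfile n η) (hμ : IsDiffusiveProfile n μ) (hh : IsCorrector n η h) :
    ∃ τ₁ : ℝ, 1 ≤ τ₁ ∧ ∃ c : ℝ, 0 < c ∧ ∀ t ≥ τ₁, ∀ x : ℝ,
      max (-(Vhat n η μ h x t)) 0 ≤ c * t ^ (-(gam n * ((n : ℝ) - 1) * (delp n + 1))) := by
  obtain ⟨hη1, hη2, hη3, hη4, hη5⟩ := hη
  obtain ⟨hμ1, hμ2, hμ3, hμ4, hμ5⟩ := hμ
  obtain ⟨hh1, hh2, hh3, hh4⟩ := hh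
  have H : EtaHyp n η (derivWithin η (Ici 0)) :=
    ⟨hn, hη1.continuousOn, fun z hz => (c2_within hη1 z hz).1, fun z hz => by
      have := (c2_within hη1 z hz).2
      rwa [hη3 z (le_of_lt hz)] at this, hη2, hη5⟩
  have hlow := mu_lower hn (fun z hz => (c2_open hμ1 z hz).1) (fun z hz => (c2_open hμ1 z hz).2)
    hμ2 hμ3 hμ4
  have hphi := phi2_bound H heven h (derivWithin h (Ici 0)) (fun z hz => (c2_within hh1 z hz).1)
    (fun z hz => by
      have := (c2_within hh1 z hz).2
      refine this.congr_deriv ?_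
      have := hh2 z (le_of_lt hz)
      linarith) hh4
  obtain ⟨T0, hT0, C, hC, hmain⟩ := phi_lower H heven hμ2 hlow hphi (phi2_bdd hn hh1.continuousOn hh4)
  obtain ⟨U, hU, hUb⟩ := mu1_bdd
  have hg := gam_pos n
  obtain ⟨hp1, hp2, -⟩ := delp_facts hn heven
  have hD := del_gt hn
  refine ⟨T0 ^ (1 / gam n), Real.one_le_rpow hT0 (by positivity),
    2 * n * C ^ (n - 1) * (2 * U + C) ^ (n - 1) * (U + C), by positivity, fun t ht x => ?_⟩
  have ht1 : 1 ≤ t := le_trans (Real.one_le_rpow hT0 (by positivity)) ht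
  have ht0 : 0 < t := by linarith
  have hTT : T0 ≤ t ^ gam n := by
    have := Real.rpow_le_rpow (by positivity) ht hg.le
    rwa [← Real.rpow_mul (by linarith), one_div, inv_mul_cancel₀ hg.ne', Real.rpow_one] at this
  have hy : 0 ≤ |x| / Real.sqrt t := by positivity
  have hz : |x| / t ^ alph n = |x| / Real.sqrt t * t ^ gam n := by
    have : Real.sqrt t = t ^ alph n * t ^ gam n := by
      rw [Real.sqrt_eq_rpow, ← Real.rpow_add ht0, alph_add]
    rw [this]; field_simp
  have hφ := hmain (t ^ gam n) hTT _ hy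
  have hφ2 : -(C * t ^ (-(gam n * (1 + delp n)))) ≤ phiFun n η μ h x t := by
    unfold phiFun
    rw [hz]
    rw [← Real.rpow_mul ht0.le, ← Real.rpow_mul ht0.le, ← Real.rpow_mul ht0.le, ← Real.rpow_mul ht0.le] at hφ
    convert hφ using 3
    · ring_nf
    · ring_nf
    · rw [eps_eq hn]; ring_nf
    · ring_nf
  have hu0 : 0 ≤ ubar x t := mu1_nonneg hy
  have hu1 : ubar x t ≤ U := hUb _ hy
  have hRHS : 0 ≤ 2 * n * C ^ (n - 1) * (2 * U + C) ^ (n - 1) * (U + C) * t ^ (-(gam n * ((n : ℝ) - 1) * (delp n + 1))) := by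
    positivity
  apply max_le _ hRHS
  unfold Vhat
  set φ := phiFun n η μ h x t with hφd
  set u := ubar x t with hud
  rcases le_or_gt 0 φ with h0 | h0
  · have : 0 ≤ 2 * (n : ℝ) * (2 * u * φ + φ ^ 2) ^ (n - 1) * (u + φ) := by positivity
    linarith
  · set E := t ^ (-(gam n * (1 + delp n))) with hE
    have hE0 : 0 < E := by positivity
    have hE1 : E ≤ 1 := Real.rpow_le_one_of_one_le_of_nonpos ht1 (by
      have : 0 < gam n * (1 + delp n) := mul_pos hg (by linarith)
      linarith)
    have hEn : t ^ (-(gam n * ((n : ℝ) - 1) * (delp n + 1))) = E ^ (n - 1) := by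
      rw [hE, ← Real.rpow_natCast, ← Real.rpow_mul ht0.le, Nat.cast_sub (by omega)]
      congr 1; push_cast; ring
    have hCE : C * E ≤ C := by nlinarith
    have a1 : |φ| ≤ C * E := by rw [abs_of_neg h0]; linarith
    have a2 : |2 * u + φ| ≤ 2 * U + C := by rw [abs_le]; constructor <;> linarith
    have a3 : |u + φ| ≤ U + C := by rw [abs_le]; constructor <;> linarith
    rw [hEn]
    refine (neg_le_abs _).trans ?_
    have e : 2 * u * φ + φ ^ 2 = φ * (2 * u + φ) := by ring
    rw [e, abs_mul _ (u + φ), abs_mul (2 * (n:ℝ)) _, abs_of_nonneg (by positivity : (0:ℝ) ≤ 2 * n), abs_pow, abs_mul φ, mul_pow]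
    calc 2 * (n:ℝ) * (|φ| ^ (n - 1) * |2 * u + φ| ^ (n - 1)) * |u + φ|
        ≤ 2 * (n:ℝ) * ((C * E) ^ (n - 1) * (2 * U + C) ^ (n - 1)) * (U + C) := by gcongr
      _ = _ := by rw [mul_pow]; ring
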